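/- arXiv:1901.05895 — 5 statements merged into one kernel-verified Lean document; each statement's English description precedes it below -/
import Mathlib

section
/- Let N be a bipartite quantum channel taking matrices on ℂ^{d_{A'}} ⊗ ℂ^{d_{B'}} to matrices on ℂ^{d_A} ⊗ ℂ^{d_B}, and let d_{L_A}, d_{L_B} be finite ancilla dimensions. For a density matrix τ on a bipartite space with cut X:Y, let E_max(X;Y)_τ = min{ D_max(τ‖σ) : σ ∈ SEP(X:Y) } be the max-relative entropy of entanglement. Then for every density matrix ρ on L_A ⊗ A' ⊗ B' ⊗ L_B: E_max(L_A A ; B L_B)_{N(ρ)} ≤ E_max(L_A A' ; B' L_B)_ρ + sup{ E_max(L_A A ; B L_B)_{N(σ')} : σ' ∈ SEP(L_A A' : B' L_B) }, where N(ρ) = (id_{L_A} ⊗ N ⊗ id_{L_B})(ρ). (The supremum on the right is the bidirectional max-relative entropy of entanglement E^{2→2}_max(N) of the channel, evaluated over separable inputs on these ancillas; thus amortization does not enhance it.) -/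
open Matrix Kronecker
open scoped ComplexOrder

noncomputable section

/-- A density matrix: positive semidefinite with unit trace. -/
def DensityMatrix {n : Type*} [Fintype n] (ρ : Matrix n n ℂ) : Prop :=
  ρ.PosSemidef ∧ ρ.trace = 1

/-- The extension `id_r ⊗ N` of a linear map `N` on matrices. -/
def idTensor {m n r : Type*} (N : Matrix m m ℂ →ₗ[ℂ] Matrix n n ℂ)
    (ρ : Matrix (r × m) (r × m) ℂ) : Matrix (r × n) (r × n) ℂ :=
  Matrix.of fun p q => N (Matrix.of fun u v => ρ (p.1, u) (q.1, v)) p.2 q.2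

/-- A quantum channel: a trace-preserving and completely positive linear map on matrices. -/
def IsQuantumChannel {m n : Type*} [Fintype m] [Fintype n]
    (N : Matrix m m ℂ →ₗ[ℂ] Matrix n n ℂ) : Prop :=
  (∀ X, (N X).trace = X.trace) ∧
  ∀ (k : ℕ) (ρ : Matrix (Fin k × m) (Fin k × m) ℂ), ρ.PosSemidef → (idTensor N ρ).PosSemidef

/-- The extension `id_{L_A} ⊗ N ⊗ id_{L_B}` of a bipartite linear map `N` on matrices,
where the total space is grouped as `(L_A × A') × (B' × L_B)`. -/
def extendChannel {mA mB nA nB LA LB : Type*}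
    (N : Matrix (mA × mB) (mA × mB) ℂ →ₗ[ℂ] Matrix (nA × nB) (nA × nB) ℂ)
    (ρ : Matrix ((LA × mA) × (mB × LB)) ((LA × mA) × (mB × LB)) ℂ) :
    Matrix ((LA × nA) × (nB × LB)) ((LA × nA) × (nB × LB)) ℂ :=
  Matrix.of fun p q =>
    N (Matrix.of fun xy x'y' =>
        ρ ((p.1.1, xy.1), (xy.2, p.2.2)) ((q.1.1, x'y'.1), (x'y'.2, q.2.2)))
      (p.1.2, p.2.1) (q.1.2, q.2.1)

/-- Separability of a bipartite state with respect to the cut `X : Y`. -/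
def SepState {X Y : Type*} [Fintype X] [Fintype Y]
    (ρ : Matrix (X × Y) (X × Y) ℂ) : Prop :=
  ∃ (k : ℕ) (p : Fin k → ℝ) (ω : Fin k → Matrix X X ℂ) (τ : Fin k → Matrix Y Y ℂ),
    (∀ z, 0 ≤ p z) ∧ (∑ z, p z = 1) ∧ (∀ z, DensityMatrix (ω z)) ∧
    (∀ z, DensityMatrix (τ z)) ∧ ρ = ∑ z, p z • (ω z ⊗ₖ τ z)

/-- The max-relative entropy `D_max(ρ‖σ) = log₂ min{λ ≥ 0 : λσ − ρ ⪰ 0}`, as an extended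
real (`+∞` when infeasible). -/
def DmaxE {n : Type*} [Fintype n] (ρ σ : Matrix n n ℂ) : EReal :=
  sInf {x : EReal | ∃ lam : ℝ, 0 ≤ lam ∧ (((lam : ℂ)) • σ - ρ).PosSemidef ∧
    x = ((Real.logb 2 lam : ℝ) : EReal)}

/-- The max-relative entropy of entanglement
`E_max(X;Y)_ρ = min_{σ ∈ SEP(X:Y)} D_max(ρ‖σ)`. -/
def EmaxE {X Y : Type*} [Fintype X] [Fintype Y] (ρ : Matrix (X × Y) (X × Y) ℂ) : EReal :=
  sInf {x : EReal | ∃ σ : Matrix (X × Y) (X × Y) ℂ,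
    DensityMatrix σ ∧ SepState σ ∧ x = DmaxE ρ σ}

/-!
If `ρ ≤ λ σ` with `σ` separable, then `N(ρ) ≤ λ N(σ)` because `id ⊗ N ⊗ id` is positive, and if
moreover `N(σ) ≤ μ τ` with `τ` separable, then `N(ρ) ≤ λ μ τ`. So the bound is the data-processing
inequality combined with the triangle inequality for `D_max`, minimised over `τ` and then over `σ`.
-/

theorem le_add_of_nonneg_of_forall_gt {a b c : EReal} (ha : 0 ≤ a) (hb : 0 ≤ b)
    (h : ∀ a' > a, ∀ b' > b, c ≤ a' + b') : c ≤ a + b :=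
  EReal.le_add_of_forall_gt (.inl (ne_bot_of_le_ne_bot EReal.zero_ne_bot ha))
    (.inr (ne_bot_of_le_ne_bot EReal.zero_ne_bot hb)) h

section Trace

variable {m n R : Type*} [Fintype m] [Fintype n] [AddCommMonoid R]

theorem trace_submatrix_equiv (e : m ≃ n) (A : Matrix n n R) :
    (A.submatrix e e).trace = A.trace :=
  e.sum_comp fun i => A i i

theorem nonempty_of_trace_ne_zero {A : Matrix n n R} (hA : A.trace ≠ 0) : Nonempty n := by
  by_contra hempty
  rw [not_nonempty_iff] at hempty
  exact hA (trace_eq_zero_of_isEmpty A)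

end Trace

section MaxRelativeEntropy

theorem posSemidef_mul_smul_sub {n : Type*} {ρ σ τ : Matrix n n ℂ} {lam mu : ℝ} (hlam : 0 ≤ lam)
    (hρσ : ((lam : ℂ) • σ - ρ).PosSemidef) (hστ : ((mu : ℂ) • τ - σ).PosSemidef) :
    (((lam * mu : ℝ) : ℂ) • τ - ρ).PosSemidef := by
  have hsum : ((lam * mu : ℝ) : ℂ) • τ - ρ
      = (lam : ℂ) • ((mu : ℂ) • τ - σ) + ((lam : ℂ) • σ - ρ) := by
    rw [smul_sub, smul_smul, Complex.ofReal_mul, sub_add_sub_cancel]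
  rw [hsum]
  exact (hστ.smul (Complex.zero_le_real.2 hlam)).add hρσ

variable {m n : Type*} [Fintype m] [Fintype n] {ρ σ τ : Matrix n n ℂ}

theorem DmaxE_le {lam : ℝ} (hlam : 0 ≤ lam) (h : ((lam : ℂ) • σ - ρ).PosSemidef) :
    DmaxE ρ σ ≤ (Real.logb 2 lam : ℝ) :=
  sInf_le ⟨lam, hlam, h, rfl⟩

theorem DmaxE_lt_iff {a : EReal} :
    DmaxE ρ σ < a ↔ ∃ lam : ℝ, 0 ≤ lam ∧ ((lam : ℂ) • σ - ρ).PosSemidef ∧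
      ((Real.logb 2 lam : ℝ) : EReal) < a := by
  simp only [DmaxE, sInf_lt_iff, Set.mem_ofPred_eq]
  constructor
  · rintro ⟨_, ⟨lam, hlam, h, rfl⟩, ha⟩
    exact ⟨lam, hlam, h, ha⟩
  · rintro ⟨lam, hlam, h, ha⟩
    exact ⟨_, ⟨lam, hlam, h, rfl⟩, ha⟩

theorem one_le_of_posSemidef_smul_sub (hρ : ρ.trace = 1) (hσ : σ.trace = 1) {lam : ℝ}
    (h : ((lam : ℂ) • σ - ρ).PosSemidef) : 1 ≤ lam := by
  have htrace : 0 ≤ (lam : ℂ) - 1 := by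
    simpa only [trace_sub, trace_smul, hρ, hσ, smul_eq_mul, mul_one] using h.trace_nonneg
  exact_mod_cast sub_nonneg.1 htrace

theorem DmaxE_nonneg (hρ : ρ.trace = 1) (hσ : σ.trace = 1) : 0 ≤ DmaxE ρ σ := by
  refine le_sInf ?_
  rintro _ ⟨lam, -, h, rfl⟩
  exact EReal.coe_nonneg.2
    (Real.logb_nonneg one_lt_two (one_le_of_posSemidef_smul_sub hρ hσ h))

theorem DmaxE_triangle (hρ : ρ.trace = 1) (hσ : σ.trace = 1) (hτ : τ.trace = 1) :
    DmaxE ρ τ ≤ DmaxE ρ σ + DmaxE σ τ := by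
  refine le_add_of_nonneg_of_forall_gt (DmaxE_nonneg hρ hσ) (DmaxE_nonneg hσ hτ) fun a ha b hb => ?_
  obtain ⟨lam, hlam, hρσ, hlam_lt⟩ := DmaxE_lt_iff.1 ha
  obtain ⟨mu, hmu, hστ, hmu_lt⟩ := DmaxE_lt_iff.1 hb
  -- `λ, μ ≥ 1` keeps the junk value `logb 2 0 = 0` out of the sum.
  have hlam_pos : 0 < lam := one_pos.trans_le (one_le_of_posSemidef_smul_sub hρ hσ hρσ)
  have hmu_pos : 0 < mu := one_pos.trans_le (one_le_of_posSemidef_smul_sub hσ hτ hστ)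
  calc DmaxE ρ τ
      ≤ (Real.logb 2 (lam * mu) : ℝ) :=
        DmaxE_le (mul_nonneg hlam hmu) (posSemidef_mul_smul_sub hlam hρσ hστ)
    _ = (Real.logb 2 lam : ℝ) + (Real.logb 2 mu : ℝ) := by
        rw [Real.logb_mul hlam_pos.ne' hmu_pos.ne', EReal.coe_add]
    _ ≤ a + b := add_le_add hlam_lt.le hmu_lt.le

theorem DmaxE_map_le {Φ : Matrix n n ℂ →ₗ[ℂ] Matrix m m ℂ}
    (hΦ : ∀ X : Matrix n n ℂ, X.PosSemidef → (Φ X).PosSemidef) :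
    DmaxE (Φ ρ) (Φ σ) ≤ DmaxE ρ σ := by
  refine le_sInf ?_
  rintro _ ⟨lam, hlam, h, rfl⟩
  refine DmaxE_le hlam ?_
  rw [← map_smul, ← map_sub]
  exact hΦ _ h

end MaxRelativeEntropy

section SeparableStates

variable {X Y : Type*} [Fintype X] [Fintype Y]

theorem densityMatrix_single [DecidableEq X] (i : X) :
    DensityMatrix (Matrix.single i i (1 : ℂ)) := by
  refine ⟨?_, trace_single_eq_same i 1⟩
  rw [← diagonal_single]
  exact PosSemidef.diagonal (Pi.single_nonneg.2 zero_le_one)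

theorem DensityMatrix.kronecker {ω : Matrix X X ℂ} {τ : Matrix Y Y ℂ} (hω : DensityMatrix ω)
    (hτ : DensityMatrix τ) : DensityMatrix (ω ⊗ₖ τ) :=
  ⟨hω.1.kronecker hτ.1, by rw [trace_kronecker, hω.2, hτ.2, one_mul]⟩

theorem sepState_kronecker {ω : Matrix X X ℂ} {τ : Matrix Y Y ℂ} (hω : DensityMatrix ω)
    (hτ : DensityMatrix τ) : SepState (ω ⊗ₖ τ) :=
  ⟨1, fun _ => 1, fun _ => ω, fun _ => τ, fun _ => zero_le_one, by simp, fun _ => hω,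
    fun _ => hτ, by simp⟩

theorem exists_densityMatrix_sepState [Nonempty (X × Y)] :
    ∃ σ : Matrix (X × Y) (X × Y) ℂ, DensityMatrix σ ∧ SepState σ := by
  classical
  obtain ⟨i, j⟩ := Classical.arbitrary (X × Y)
  have hi := densityMatrix_single i
  have hj := densityMatrix_single j
  exact ⟨_, hi.kronecker hj, sepState_kronecker hi hj⟩

end SeparableStates

section MaxRelativeEntropyOfEntanglement

variable {X Y : Type*} [Fintype X] [Fintype Y] {ρ σ : Matrix (X × Y) (X × Y) ℂ}

theorem EmaxE_le_DmaxE (hσ : DensityMatrix σ) (hsep : SepState σ) : EmaxE ρ ≤ DmaxE ρ σ :=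
  sInf_le ⟨σ, hσ, hsep, rfl⟩

theorem EmaxE_lt_iff {a : EReal} :
    EmaxE ρ < a ↔ ∃ σ : Matrix (X × Y) (X × Y) ℂ,
      DensityMatrix σ ∧ SepState σ ∧ DmaxE ρ σ < a := by
  simp only [EmaxE, sInf_lt_iff, Set.mem_ofPred_eq]
  constructor
  · rintro ⟨_, ⟨σ, hσ, hsep, rfl⟩, ha⟩
    exact ⟨σ, hσ, hsep, ha⟩
  · rintro ⟨σ, hσ, hsep, ha⟩
    exact ⟨_, ⟨σ, hσ, hsep, rfl⟩, ha⟩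

theorem EmaxE_nonneg (hρ : ρ.trace = 1) : 0 ≤ EmaxE ρ := by
  refine le_sInf ?_
  rintro _ ⟨σ, hσ, -, rfl⟩
  exact DmaxE_nonneg hρ hσ.2

theorem EmaxE_le_DmaxE_add_EmaxE (hρ : ρ.trace = 1) (hσ : σ.trace = 1) :
    EmaxE ρ ≤ DmaxE ρ σ + EmaxE σ := by
  refine le_add_of_nonneg_of_forall_gt (DmaxE_nonneg hρ hσ) (EmaxE_nonneg hσ) fun a ha b hb => ?_
  obtain ⟨τ, hτ, hsep, hb'⟩ := EmaxE_lt_iff.1 hb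
  calc EmaxE ρ
      ≤ DmaxE ρ τ := EmaxE_le_DmaxE hτ hsep
    _ ≤ DmaxE ρ σ + DmaxE σ τ := DmaxE_triangle hρ hσ hτ.2
    _ ≤ a + b := add_le_add ha.le hb'.le

end MaxRelativeEntropyOfEntanglement

section IdTensor

variable {m n r : Type*} [Fintype m] [Fintype n]
  {N : Matrix m m ℂ →ₗ[ℂ] Matrix n n ℂ}

theorem IsQuantumChannel.posSemidef_idTensor [Finite r] (hN : IsQuantumChannel N)
    {ρ : Matrix (r × m) (r × m) ℂ} (hρ : ρ.PosSemidef) : (idTensor N ρ).PosSemidef := by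
  obtain ⟨_, ⟨e⟩⟩ := Finite.exists_equiv_fin r
  have hFin := hN.2 _ _ (hρ.submatrix (Prod.map e.symm id))
  have hreindex : idTensor N ρ =
      (idTensor N (ρ.submatrix (Prod.map e.symm id) (Prod.map e.symm id))).submatrix
        (Prod.map e id) (Prod.map e id) := by
    ext p q
    simp [idTensor]
  rw [hreindex]
  exact hFin.submatrix _

theorem IsQuantumChannel.trace_idTensor [Fintype r] (hN : IsQuantumChannel N)
    (ρ : Matrix (r × m) (r × m) ℂ) : (idTensor N ρ).trace = ρ.trace := by
  calc (idTensor N ρ).trace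
      = ∑ i, (N (ρ.submatrix (Prod.mk i) (Prod.mk i))).trace := Fintype.sum_prod_type _
    _ = ∑ i, (ρ.submatrix (Prod.mk i) (Prod.mk i)).trace :=
        Finset.sum_congr rfl fun i _ => hN.1 _
    _ = ρ.trace := (Fintype.sum_prod_type fun p => ρ p p).symm

end IdTensor

section ExtendChannel

variable {mA mB nA nB LA LB : Type*}

/-- The regrouping `(L_A A')(B' L_B) ≃ (L_A L_B)(A' B')` that collects the two ancillas into a
single reference system, so that `id_{L_A} ⊗ N ⊗ id_{L_B}` becomes `id_{L_A L_B} ⊗ N`. -/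
def ancillaEquiv (LA mA mB LB : Type*) : (LA × mA) × (mB × LB) ≃ (LA × LB) × (mA × mB) :=
  ((Equiv.refl _).prodCongr (Equiv.prodComm mB LB)).trans (Equiv.prodProdProdComm LA mA LB mB)

theorem extendChannel_eq_submatrix_idTensor
    (N : Matrix (mA × mB) (mA × mB) ℂ →ₗ[ℂ] Matrix (nA × nB) (nA × nB) ℂ)
    (ρ : Matrix ((LA × mA) × (mB × LB)) ((LA × mA) × (mB × LB)) ℂ) :
    extendChannel N ρ =
      (idTensor N (ρ.submatrix (ancillaEquiv LA mA mB LB).symm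
        (ancillaEquiv LA mA mB LB).symm)).submatrix
        (ancillaEquiv LA nA nB LB) (ancillaEquiv LA nA nB LB) :=
  rfl

/-- `extendChannel N`, that is `id_{L_A} ⊗ N ⊗ id_{L_B}`, bundled as a linear map so that facts
about arbitrary positive trace-preserving linear maps apply to it. -/
def extendChannelLinearMap (LA LB : Type*)
    (N : Matrix (mA × mB) (mA × mB) ℂ →ₗ[ℂ] Matrix (nA × nB) (nA × nB) ℂ) :
    Matrix ((LA × mA) × (mB × LB)) ((LA × mA) × (mB × LB)) ℂ →ₗ[ℂ]
      Matrix ((LA × nA) × (nB × LB)) ((LA × nA) × (nB × LB)) ℂ where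
  toFun := extendChannel N
  map_add' _ _ := by
    ext p q
    exact congrFun₂ (map_add N _ _) _ _
  map_smul' c _ := by
    ext p q
    exact congrFun₂ (map_smul N c _) _ _

variable [Fintype mA] [Fintype mB] [Fintype nA] [Fintype nB]
  {N : Matrix (mA × mB) (mA × mB) ℂ →ₗ[ℂ] Matrix (nA × nB) (nA × nB) ℂ}

theorem IsQuantumChannel.posSemidef_extendChannel [Finite LA] [Finite LB]
    (hN : IsQuantumChannel N) {ρ : Matrix ((LA × mA) × (mB × LB)) ((LA × mA) × (mB × LB)) ℂ}
    (hρ : ρ.PosSemidef) : (extendChannel N ρ).PosSemidef := by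
  rw [extendChannel_eq_submatrix_idTensor]
  exact (hN.posSemidef_idTensor (hρ.submatrix _)).submatrix _

theorem IsQuantumChannel.trace_extendChannel [Fintype LA] [Fintype LB]
    (hN : IsQuantumChannel N) (ρ : Matrix ((LA × mA) × (mB × LB)) ((LA × mA) × (mB × LB)) ℂ) :
    (extendChannel N ρ).trace = ρ.trace := by
  rw [extendChannel_eq_submatrix_idTensor, trace_submatrix_equiv, hN.trace_idTensor,
    trace_submatrix_equiv]

end ExtendChannel

theorem stmt1_general {X Y Z W : Type*} [Fintype X] [Fintype Y] [Fintype Z] [Fintype W]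
    (Φ : Matrix (X × Y) (X × Y) ℂ →ₗ[ℂ] Matrix (Z × W) (Z × W) ℂ)
    (hpos : ∀ ρ : Matrix (X × Y) (X × Y) ℂ, ρ.PosSemidef → (Φ ρ).PosSemidef)
    (htrace : ∀ ρ : Matrix (X × Y) (X × Y) ℂ, (Φ ρ).trace = ρ.trace)
    (ρ : Matrix (X × Y) (X × Y) ℂ) (hρ : ρ.trace = 1) :
    EmaxE (Φ ρ) ≤ EmaxE ρ +
      sSup {x : EReal | ∃ σ' : Matrix (X × Y) (X × Y) ℂ,
        DensityMatrix σ' ∧ SepState σ' ∧ x = EmaxE (Φ σ')} := by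
  set S := sSup {x : EReal | ∃ σ' : Matrix (X × Y) (X × Y) ℂ,
    DensityMatrix σ' ∧ SepState σ' ∧ x = EmaxE (Φ σ')}
  have hle_S {σ : Matrix (X × Y) (X × Y) ℂ} (hσ : DensityMatrix σ) (hsep : SepState σ) :
      EmaxE (Φ σ) ≤ S := le_sSup ⟨σ, hσ, hsep, rfl⟩
  have hS : 0 ≤ S := by
    have := nonempty_of_trace_ne_zero (hρ.trans_ne one_ne_zero)
    obtain ⟨σ, hσ, hsep⟩ := exists_densityMatrix_sepState (X := X) (Y := Y)
    exact (EmaxE_nonneg ((htrace σ).trans hσ.2)).trans (hle_S hσ hsep)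
  refine le_add_of_nonneg_of_forall_gt (EmaxE_nonneg hρ) hS fun a ha b hb => ?_
  obtain ⟨σ, hσ, hsep, hσ_lt⟩ := EmaxE_lt_iff.1 ha
  calc EmaxE (Φ ρ)
      ≤ DmaxE (Φ ρ) (Φ σ) + EmaxE (Φ σ) :=
        EmaxE_le_DmaxE_add_EmaxE ((htrace ρ).trans hρ) ((htrace σ).trans hσ.2)
    _ ≤ DmaxE ρ σ + S := add_le_add (DmaxE_map_le hpos) (hle_S hσ hsep)
    _ ≤ a + b := add_le_add hσ_lt.le hb.le

/-- amortization does not enhance the bidirectional max-relative entropy of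
entanglement: `E_max(L_A A ; B L_B)_{N(ρ)} ≤ E_max(L_A A' ; B' L_B)_ρ + E^{2→2}_max(N)`,
where `E^{2→2}_max(N)` is the supremum of `E_max` of the channel output over separable
input states on these ancillas. -/
theorem stmt1 {dA' dB' dA dB : ℕ}
    (N : Matrix (Fin dA' × Fin dB') (Fin dA' × Fin dB') ℂ →ₗ[ℂ]
      Matrix (Fin dA × Fin dB) (Fin dA × Fin dB) ℂ)
    (hN : IsQuantumChannel N)
    (dLA dLB : ℕ)
    (ρ : Matrix ((Fin dLA × Fin dA') × (Fin dB' × Fin dLB))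
      ((Fin dLA × Fin dA') × (Fin dB' × Fin dLB)) ℂ)
    (hρ : DensityMatrix ρ) :
    EmaxE (extendChannel N ρ)
      ≤ EmaxE ρ +
        sSup {x : EReal | ∃ σ' : Matrix ((Fin dLA × Fin dA') × (Fin dB' × Fin dLB))
            ((Fin dLA × Fin dA') × (Fin dB' × Fin dLB)) ℂ,
          DensityMatrix σ' ∧ SepState σ' ∧ x = EmaxE (extendChannel N σ')} :=
  stmt1_general (extendChannelLinearMap (Fin dLA) (Fin dLB) N)
    (fun _ => hN.posSemidef_extendChannel) hN.trace_extendChannel ρ hρ.2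
end
end

section
/- Let 1 ≤ d_A ≤ d_B and ε ∈ (0,1). Let ψ_AB be a rank-one density matrix (pure state) on ℂ^{d_A} ⊗ ℂ^{d_B} whose reduced state ψ_A = Tr_B(ψ_AB) satisfies S(ψ_A) ≥ (1 − ε)·log₂ d_A. Then there exists a unitary U_B on ℂ^{d_B} such that (1/2)·‖(1 ⊗ U_B) ψ_AB (1 ⊗ U_B)† − Φ_AB‖₁ ≤ (2 ε ln d_A)^{1/4}, where Φ_AB is the maximally entangled state of Schmidt rank d_A and ln denotes the natural logarithm. -/
open Matrix Kronecker
open scoped ComplexOrder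

noncomputable section

/-- The trace norm of a matrix: the sum of its singular values, i.e. `Tr √(XᴴX)`. -/
def traceNorm {m n : Type*} [Fintype m] [Fintype n] [DecidableEq n] (X : Matrix m n ℂ) : ℝ :=
  ∑ i, Real.sqrt ((Matrix.posSemidef_conjTranspose_mul_self X).1.eigenvalues i)

/-- The von Neumann entropy (base 2) of a matrix, via its eigenvalues. -/
def entropy {n : Type*} [Fintype n] [DecidableEq n] (ρ : Matrix n n ℂ) : ℝ :=
  if h : ρ.IsHermitian then (∑ i, Real.negMulLog (h.eigenvalues i)) / Real.log 2 else 0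

/-- Partial trace over the second tensor factor. -/
def ptraceR {X Y : Type*} [Fintype Y] (M : Matrix (X × Y) (X × Y) ℂ) : Matrix X X ℂ :=
  Matrix.of fun i j => ∑ k, M (i, k) (j, k)

/-- The maximally entangled state `Φ` of Schmidt rank `dA` on `ℂ^{dA} ⊗ ℂ^{dB}` (`dA ≤ dB`),
`|φ⟩ = (1/√dA) ∑_{i<dA} |i⟩ ⊗ |i⟩`. -/
def maxEnt (dA dB : ℕ) : Matrix (Fin dA × Fin dB) (Fin dA × Fin dB) ℂ :=
  Matrix.of fun p q =>
    if ((p.2 : ℕ) = (p.1 : ℕ) ∧ (q.2 : ℕ) = (q.1 : ℕ)) then ((dA : ℂ))⁻¹ else 0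

/-!
Write the state vector as `vec X` with `X : Matrix B A ℂ`, so that a unitary `U` on `B` acts by
`X ↦ U * X`, the reduced state is `(Xᴴ * X)ᵀ`, and `Φ` is the projection onto `vec E / √d_A` for an
isometry `E`. By polar decomposition some `U` makes the overlap `tr (Eᴴ * U * X) / √d_A` equal to
`‖X‖₁ / √d_A`. The square of `‖X‖₁ = ∑ √pᵢ`, where `p` is the spectrum of the reduced state, is the
exponential of its Rényi entropy of order `1/2`, which is at least `2 ^ S`. As the trace distance of
two pure states with overlap `F` is `√(1 - |F|²)`, it is at most `√(1 - 2 ^ S / d_A)`.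
-/

open scoped MatrixOrder

section Entropy

theorem exp_sum_negMulLog_le_sq_sum_sqrt {ι : Type*} (s : Finset ι) {p : ι → ℝ}
    (hp : ∀ i ∈ s, 0 ≤ p i) (hsum : ∑ i ∈ s, p i = 1) :
    Real.exp (∑ i ∈ s, Real.negMulLog (p i)) ≤ (∑ i ∈ s, √(p i)) ^ 2 := by
  have exp_negMulLog (i : ι) (hi : i ∈ s) :
      Real.exp (Real.negMulLog (p i)) = ((√(p i))⁻¹ ^ p i) ^ 2 := by
    rcases (hp i hi).eq_or_lt with hzero | hpos
    · simp [← hzero]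
    · rw [Real.rpow_def_of_pos (by positivity), Real.log_inv, Real.log_sqrt hpos.le,
        ← Real.exp_nat_mul, Real.negMulLog]
      congr 1
      push_cast
      ring
  have prod_nonneg : 0 ≤ ∏ i ∈ s, (√(p i))⁻¹ ^ p i := Finset.prod_nonneg fun i _ ↦ by positivity
  rw [Real.exp_sum, Finset.prod_congr rfl exp_negMulLog, Finset.prod_pow]
  refine pow_le_pow_left₀ prod_nonneg ?_ 2
  calc ∏ i ∈ s, (√(p i))⁻¹ ^ p i
      ≤ ∑ i ∈ s, p i * (√(p i))⁻¹ :=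
        Real.geom_mean_le_arith_mean_weighted s p _ hp hsum fun i _ ↦ by positivity
    _ = ∑ i ∈ s, √(p i) := by simp_rw [← div_eq_mul_inv, Real.div_sqrt]

theorem sqrt_one_sub_exp_neg_le {x : ℝ} (hx : 0 ≤ x) :
    √(1 - Real.exp (-x)) ≤ (2 * x) ^ ((1 : ℝ) / 4) := by
  have le_self : 1 - Real.exp (-x) ≤ x := by linarith [Real.add_one_le_exp (-x)]
  have le_one : 1 - Real.exp (-x) ≤ 1 := by linarith [Real.exp_pos (-x)]
  have nonneg : 0 ≤ 1 - Real.exp (-x) := by linarith [Real.exp_le_one_iff.2 (neg_nonpos.2 hx)]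
  calc √(1 - Real.exp (-x)) = ((1 - Real.exp (-x)) ^ 2) ^ ((1 : ℝ) / 4) := by
        rw [Real.sqrt_eq_rpow, ← Real.rpow_natCast_mul nonneg]
        norm_num
    _ ≤ (2 * x) ^ ((1 : ℝ) / 4) := by
        gcongr
        nlinarith

theorem sqrt_one_sub_two_rpow_div_le {d ε S : ℝ} (hd : 1 ≤ d) (hε : 0 ≤ ε)
    (hS : (1 - ε) * Real.logb 2 d ≤ S) :
    √(1 - 2 ^ S / d) ≤ (2 * ε * Real.log d) ^ ((1 : ℝ) / 4) := by
  have hd₀ : 0 < d := one_pos.trans_le hd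
  have exp_le : Real.exp (-(ε * Real.log d)) ≤ 2 ^ S / d := by
    calc Real.exp (-(ε * Real.log d)) = d ^ (1 - ε) / d := by
          rw [Real.rpow_sub hd₀, Real.rpow_one, div_right_comm, div_self hd₀.ne', Real.exp_neg,
            one_div, Real.rpow_def_of_pos hd₀, mul_comm]
      _ = 2 ^ ((1 - ε) * Real.logb 2 d) / d := by
          rw [mul_comm, Real.rpow_mul two_pos.le,
            Real.rpow_logb two_pos (OfNat.ofNat_ne_one 2) hd₀]
      _ ≤ 2 ^ S / d := by
          gcongr
          exact one_le_two
  calc √(1 - 2 ^ S / d) ≤ √(1 - Real.exp (-(ε * Real.log d))) := by gcongr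
    _ ≤ (2 * ε * Real.log d) ^ ((1 : ℝ) / 4) := by
        rw [mul_assoc]
        exact sqrt_one_sub_exp_neg_le (mul_nonneg hε (Real.log_nonneg hd))

theorem entropy_transpose {n : Type*} [Fintype n] [DecidableEq n] (ρ : Matrix n n ℂ) :
    entropy ρᵀ = entropy ρ := by
  by_cases h : ρ.IsHermitian
  · have eigenvalues_eq : h.transpose.eigenvalues = h.eigenvalues :=
      (h.transpose.eigenvalues_eq_eigenvalues_iff h).2 (charpoly_transpose ρ)
    rw [entropy, entropy, dif_pos h, dif_pos h.transpose, eigenvalues_eq]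
  · rw [entropy, entropy, dif_neg h, dif_neg (isHermitian_transpose_iff.not.2 h)]

theorem two_rpow_entropy_le_traceNorm_sq {m n : Type*} [Fintype m] [Fintype n] [DecidableEq n]
    {X : Matrix m n ℂ} (hX : (Xᴴ * X).trace = 1) :
    2 ^ entropy (Xᴴ * X) ≤ traceNorm X ^ 2 := by
  have hpos := posSemidef_conjTranspose_mul_self X
  have sum_eigenvalues : ∑ i, hpos.1.eigenvalues i = 1 := by
    simpa [hpos.1.trace_eq_sum_eigenvalues] using congrArg Complex.re hX
  rw [entropy, dif_pos hpos.1, Real.rpow_def_of_pos two_pos,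
    mul_div_cancel₀ _ (Real.log_pos one_lt_two).ne']
  exact exp_sum_negMulLog_le_sq_sum_sqrt _ (fun i _ ↦ hpos.eigenvalues_nonneg i) sum_eigenvalues

end Entropy

section PolarDecomposition

variable {𝕜 : Type*} [RCLike 𝕜]

theorem exists_linearIsometry_comp_eq_of_norm_eq {E V : Type*} [AddCommGroup E] [Module 𝕜 E]
    [NormedAddCommGroup V] [InnerProductSpace 𝕜 V] [FiniteDimensional 𝕜 V] {f g : E →ₗ[𝕜] V}
    (h : ∀ x, ‖f x‖ = ‖g x‖) : ∃ L : V →ₗᵢ[𝕜] V, L.toLinearMap ∘ₗ f = g := by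
  obtain ⟨s, hs⟩ := f.rangeRestrict.exists_rightInverse_of_surjective f.range_rangeRestrict
  have apply_section (y : f.range) : f (s y) = y :=
    congrArg Subtype.val (LinearMap.congr_fun hs y)
  let L₀ : f.range →ₗᵢ[𝕜] V := ⟨g ∘ₗ s, fun y ↦ by simp [← h, apply_section]⟩
  refine ⟨L₀.extend, LinearMap.ext fun x ↦ ?_⟩
  have apply_section_apply : g (s (f.rangeRestrict x)) = g x := by
    rw [← sub_eq_zero, ← map_sub, ← norm_eq_zero, ← h, map_sub, apply_section]
    simp
  exact (L₀.extend_apply (f.rangeRestrict x)).trans apply_section_apply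

variable {m n : Type*} [Fintype m] [Fintype n] [DecidableEq n]

theorem exists_mem_unitaryGroup_toEuclideanLin_eq
    (L : EuclideanSpace 𝕜 n →ₗᵢ[𝕜] EuclideanSpace 𝕜 n) :
    ∃ U ∈ unitaryGroup n 𝕜, toEuclideanLin U = L.toLinearMap := by
  let e := EuclideanSpace.basisFun n 𝕜
  have toMatrix_eq : e.toBasis.toMatrix (e.map (L.toLinearIsometryEquiv rfl)) =
      toEuclideanLin.symm L.toLinearMap := by
    ext i j
    simp [e, Module.Basis.toMatrix_apply, toEuclideanLin_eq_toLin_orthonormal,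
      LinearMap.toMatrix_apply]
  exact ⟨_, toMatrix_eq ▸ e.toMatrix_orthonormalBasis_mem_unitary _,
    LinearEquiv.apply_symm_apply _ _⟩

theorem norm_toEuclideanLin_apply (A : Matrix m n 𝕜) (x : EuclideanSpace 𝕜 n) :
    ‖toEuclideanLin A x‖ = √(RCLike.re (star x.ofLp ⬝ᵥ (Aᴴ * A) *ᵥ x.ofLp)) := by
  rw [norm_eq_sqrt_re_inner (𝕜 := 𝕜), EuclideanSpace.inner_eq_star_dotProduct, dotProduct_comm,
    ofLp_toLpLin, toLin'_apply, star_mulVec, dotProduct_mulVec, dotProduct_mulVec, vecMul_vecMul]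

theorem exists_mem_unitaryGroup_mul_eq_of_conjTranspose_mul_self_eq {l : Type*} [Finite l]
    {A B : Matrix n l 𝕜} (h : Aᴴ * A = Bᴴ * B) : ∃ U ∈ unitaryGroup n 𝕜, U * A = B := by
  classical
  cases nonempty_fintype l
  obtain ⟨L, hL⟩ := exists_linearIsometry_comp_eq_of_norm_eq
    (f := toEuclideanLin A) (g := toEuclideanLin B)
    fun x ↦ by rw [norm_toEuclideanLin_apply, norm_toEuclideanLin_apply, h]
  obtain ⟨U, hU, hUL⟩ := exists_mem_unitaryGroup_toEuclideanLin_eq L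
  refine ⟨U, hU, toEuclideanLin.injective ?_⟩
  rw [toLpLin_mul, hUL, hL]

theorem trace_cfc {A : Matrix n n 𝕜} (hA : A.IsHermitian) (f : ℝ → ℝ) :
    (cfc f A).trace = ∑ i, (f (hA.eigenvalues i) : 𝕜) := by
  rw [hA.cfc_eq, IsHermitian.cfc, Unitary.conjStarAlgAut_apply, trace_mul_cycle,
    Unitary.coe_star_mul_self, one_mul, trace_diagonal]
  rfl

theorem trace_sqrt_conjTranspose_mul_self (X : Matrix m n ℂ) :
    (CFC.sqrt (Xᴴ * X)).trace = traceNorm X := by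
  have hX := posSemidef_conjTranspose_mul_self X
  rw [CFC.sqrt_eq_real_sqrt _ hX.nonneg, cfcₙ_eq_cfc, trace_cfc hX.1, traceNorm,
    Complex.ofReal_sum]
  rfl

theorem exists_mem_unitaryGroup_trace_eq_traceNorm [DecidableEq m] {E : Matrix m n ℂ}
    (hE : Eᴴ * E = 1) (X : Matrix m n ℂ) :
    ∃ U ∈ unitaryGroup m ℂ, (Eᴴ * (U * X)).trace = traceNorm X := by
  set R := CFC.sqrt (Xᴴ * X)
  have hR : Rᴴ = R := (CFC.sqrt_nonneg (Xᴴ * X)).isSelfAdjoint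
  have gram_eq : Xᴴ * X = (E * R)ᴴ * (E * R) := by
    rw [conjTranspose_mul, hR, Matrix.mul_assoc, ← Matrix.mul_assoc Eᴴ, hE, Matrix.one_mul,
      CFC.sqrt_mul_sqrt_self _ (posSemidef_conjTranspose_mul_self X).nonneg]
  obtain ⟨U, hU, hUX⟩ := exists_mem_unitaryGroup_mul_eq_of_conjTranspose_mul_self_eq gram_eq
  refine ⟨U, hU, ?_⟩
  rw [hUX, ← Matrix.mul_assoc, hE, Matrix.one_mul, trace_sqrt_conjTranspose_mul_self]

end PolarDecomposition

section PureStates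

variable {m n : Type*} [Fintype n]

theorem traceNorm_sq_le_rank_mul_trace [Fintype m] [DecidableEq n] (X : Matrix m n ℂ) :
    traceNorm X ^ 2 ≤ X.rank * (Xᴴ * X).trace.re := by
  have hX := posSemidef_conjTranspose_mul_self X
  let support := Finset.univ.filter fun i ↦ hX.1.eigenvalues i ≠ 0
  have card_support : support.card = X.rank := by
    rw [← rank_conjTranspose_mul_self, hX.1.rank_eq_card_non_zero_eigs, Fintype.card_subtype]
  have traceNorm_eq : traceNorm X = ∑ i ∈ support, √(hX.1.eigenvalues i) :=
    (Finset.sum_filter_of_ne fun i _ ↦ mt fun hi ↦ by rw [hi, Real.sqrt_zero]).symm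
  have trace_eq : (Xᴴ * X).trace.re = ∑ i ∈ support, √(hX.1.eigenvalues i) ^ 2 := by
    rw [hX.1.trace_eq_sum_eigenvalues]
    simp [Real.sq_sqrt (hX.eigenvalues_nonneg _), support, Finset.sum_filter_ne_zero]
  rw [traceNorm_eq, trace_eq, ← card_support]
  exact sq_sum_le_card_mul_sum_sq

theorem rank_vecMulVec_sub_vecMulVec_le {R : Type*} [CommRing R] [StrongRankCondition R]
    (x z : m → R) (y w : n → R) : (vecMulVec x y - vecMulVec z w).rank ≤ 2 := by
  have factorization : vecMulVec x y - vecMulVec z w = (of ![x, z])ᵀ * of ![y, -w] := by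
    ext i j
    simp [Matrix.mul_apply, vecMulVec_apply, Fin.sum_univ_two, sub_eq_add_neg]
  rw [factorization]
  exact (rank_mul_le_left _ _).trans (rank_le_card_width _)

theorem star_dotProduct_mul_star_dotProduct (x y : n → ℂ) :
    (star x ⬝ᵥ y) * (star y ⬝ᵥ x) = (‖star y ⬝ᵥ x‖ ^ 2 : ℝ) := by
  have star_overlap : star x ⬝ᵥ y = star (star y ⬝ᵥ x) := by
    rw [star_dotProduct, dotProduct_comm]
  rw [star_overlap, Complex.ofReal_pow]
  exact Complex.conj_mul' _

theorem traceNorm_vecMulVec_sub_vecMulVec_le [DecidableEq n] {x y : n → ℂ}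
    (hx : star x ⬝ᵥ x = 1) (hy : star y ⬝ᵥ y = 1) :
    traceNorm (vecMulVec x (star x) - vecMulVec y (star y)) ≤
      2 * √(1 - ‖star y ⬝ᵥ x‖ ^ 2) := by
  set X := vecMulVec x (star x) - vecMulVec y (star y) with hX
  have trace_eq : (Xᴴ * X).trace = (2 * (1 - ‖star y ⬝ᵥ x‖ ^ 2) : ℝ) := by
    have hXH : Xᴴ = X := by simp [hX]
    have overlap := star_dotProduct_mul_star_dotProduct x y
    rw [hXH]
    simp only [hX, sub_mul, mul_sub, vecMulVec_mul_vecMulVec, trace_sub, trace_vecMulVec,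
      dotProduct_smul, dotProduct_comm _ (star _), hx, hy, smul_eq_mul]
    push_cast at overlap ⊢
    linear_combination -2 * overlap
  have rank_le : (X.rank : ℝ) ≤ 2 := mod_cast rank_vecMulVec_sub_vecMulVec_le x y _ _
  have trace_nonneg : 0 ≤ (Xᴴ * X).trace.re :=
    (Complex.le_def.1 (posSemidef_conjTranspose_mul_self X).trace_nonneg).1
  calc traceNorm X ≤ √(X.rank * (Xᴴ * X).trace.re) :=
        Real.le_sqrt_of_sq_le (traceNorm_sq_le_rank_mul_trace X)
    _ ≤ √(2 * (Xᴴ * X).trace.re) := by gcongr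
    _ = √(2 ^ 2 * (1 - ‖star y ⬝ᵥ x‖ ^ 2)) := by
        rw [trace_eq, Complex.ofReal_re]
        ring_nf
    _ = 2 * √(1 - ‖star y ⬝ᵥ x‖ ^ 2) := by
        rw [Real.sqrt_mul (by norm_num), Real.sqrt_sq (by norm_num)]

theorem exists_eq_vecMulVec_star_of_rank_eq_one {𝕜 : Type*} [RCLike 𝕜]
    {A : Matrix n n 𝕜} (hA : A.PosSemidef) (hrank : A.rank = 1) :
    ∃ v : n → 𝕜, A = vecMulVec v (star v) := by
  classical
  rw [hA.1.rank_eq_card_non_zero_eigs, Fintype.card_eq_one_iff] at hrank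
  obtain ⟨⟨k, _⟩, hk⟩ := hrank
  have eigenvalue_eq_zero {i : n} (hi : i ≠ k) : hA.1.eigenvalues i = 0 := by
    by_contra hne
    exact hi (congrArg Subtype.val (hk ⟨i, hne⟩))
  let Q : Matrix n n 𝕜 := hA.1.eigenvectorUnitary
  have spectral (i j : n) : A i j = ∑ l, Q i l * hA.1.eigenvalues l * star (Q j l) := by
    conv_lhs => rw [hA.1.spectral_theorem, Unitary.conjStarAlgAut_apply, Matrix.mul_apply]
    simp [Q, mul_diagonal, star_apply]
  have sqrt_mul_sqrt : ((√(hA.1.eigenvalues k) : ℝ) : 𝕜) * (√(hA.1.eigenvalues k) : ℝ) =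
      hA.1.eigenvalues k := by
    rw [← RCLike.ofReal_mul, Real.mul_self_sqrt (hA.eigenvalues_nonneg k)]
  refine ⟨fun i ↦ (√(hA.1.eigenvalues k) : ℝ) * Q i k, ?_⟩
  ext i j
  rw [spectral, Finset.sum_eq_single_of_mem k (Finset.mem_univ k)
    fun l _ hl ↦ by simp [eigenvalue_eq_zero hl], ← sqrt_mul_sqrt]
  simp only [vecMulVec_apply, Pi.star_apply, star_mul', RCLike.star_def, RCLike.conj_ofReal]
  ring

theorem exists_eq_vecMulVec_vec [Fintype m]
    {ψ : Matrix (n × m) (n × m) ℂ} (hψ : DensityMatrix ψ) (hrank : ψ.rank = 1) :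
    ∃ X : Matrix m n ℂ, (Xᴴ * X).trace = 1 ∧ ψ = vecMulVec (vec X) (star (vec X)) := by
  obtain ⟨v, rfl⟩ := exists_eq_vecMulVec_star_of_rank_eq_one hψ.1 hrank
  obtain ⟨X, rfl⟩ := vec_bijective.surjective v
  refine ⟨X, ?_, rfl⟩
  rw [← star_vec_dotProduct_vec, dotProduct_comm, ← trace_vecMulVec]
  exact hψ.2

theorem ptraceR_vecMulVec_vec (X : Matrix n m ℂ) :
    ptraceR (vecMulVec (vec X) (star (vec X))) = (Xᴴ * X)ᵀ := by
  ext i j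
  simp [ptraceR, Matrix.mul_apply, vecMulVec_apply, mul_comm]

theorem one_kronecker_mul_vecMulVec_vec_mul [Fintype m] [DecidableEq n] {m' : Type*}
    (U : Matrix m' m ℂ) (X : Matrix m n ℂ) :
    ((1 : Matrix n n ℂ) ⊗ₖ U) * vecMulVec (vec X) (star (vec X)) *
        ((1 : Matrix n n ℂ) ⊗ₖ U)ᴴ =
      vecMulVec (vec (U * X)) (star (vec (U * X))) := by
  rw [mul_vecMulVec, vecMulVec_mul, ← star_mulVec, ← vec_mul_eq_mulVec]

end PureStates

section MaximallyEntangled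

variable {m n : Type*} [Fintype n]

/-- The vector `(1/√|n|) ∑ i, |i⟩ ⊗ E|i⟩`, which is a maximally entangled unit vector when `E` is
an isometry. -/
def maxEntVec (E : Matrix m n ℂ) : n × m → ℂ :=
  ((√(Fintype.card n) : ℝ) : ℂ)⁻¹ • vec E

variable [Fintype m]

theorem star_maxEntVec_dotProduct_vec (E X : Matrix m n ℂ) :
    star (maxEntVec E) ⬝ᵥ vec X = (Eᴴ * X).trace / (√(Fintype.card n) : ℝ) := by
  rw [maxEntVec, star_smul, smul_dotProduct, star_vec_dotProduct_vec]
  simp [div_eq_inv_mul]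

theorem star_maxEntVec_dotProduct_self [DecidableEq n] [Nonempty n] {E : Matrix m n ℂ}
    (hE : Eᴴ * E = 1) : star (maxEntVec E) ⬝ᵥ maxEntVec E = 1 := by
  have card_pos : (0 : ℝ) < Fintype.card n := mod_cast Fintype.card_pos
  have sqrt_ne_zero : ((√(Fintype.card n) : ℝ) : ℂ) ≠ 0 :=
    mod_cast (Real.sqrt_pos.2 card_pos).ne'
  conv_lhs => enter [2]; rw [maxEntVec]
  rw [dotProduct_smul, star_maxEntVec_dotProduct_vec, hE, trace_one, smul_eq_mul]
  field_simp
  rw [← Complex.ofReal_pow, Real.sq_sqrt card_pos.le, Complex.ofReal_natCast]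

theorem exists_mem_unitaryGroup_half_traceNorm_sub_maxEntVec_le [DecidableEq m] [DecidableEq n]
    {X E : Matrix m n ℂ} (hX : (Xᴴ * X).trace = 1) (hE : Eᴴ * E = 1) :
    ∃ U ∈ unitaryGroup m ℂ,
      (1 / 2) * traceNorm (vecMulVec (vec (U * X)) (star (vec (U * X))) -
          vecMulVec (maxEntVec E) (star (maxEntVec E))) ≤
        √(1 - 2 ^ entropy (Xᴴ * X) / Fintype.card n) := by
  have : Nonempty n := by
    by_contra hempty
    rw [not_nonempty_iff] at hempty
    simp [trace] at hX
  obtain ⟨U, hU, htrace⟩ := exists_mem_unitaryGroup_trace_eq_traceNorm hE X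
  have unit_vec : star (vec (U * X)) ⬝ᵥ vec (U * X) = 1 := by
    rw [star_vec_dotProduct_vec, conjTranspose_mul, Matrix.mul_assoc, ← Matrix.mul_assoc Uᴴ,
      ← star_eq_conjTranspose U, mem_unitaryGroup_iff'.1 hU, Matrix.one_mul, hX]
  have overlap_sq : ‖star (maxEntVec E) ⬝ᵥ vec (U * X)‖ ^ 2 =
      traceNorm X ^ 2 / Fintype.card n := by
    rw [star_maxEntVec_dotProduct_vec, htrace, ← Complex.ofReal_div, Complex.norm_real,
      Real.norm_eq_abs, sq_abs, div_pow, Real.sq_sqrt (Nat.cast_nonneg _)]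
  refine ⟨U, hU, ?_⟩
  calc (1 / 2) * traceNorm (vecMulVec (vec (U * X)) (star (vec (U * X))) -
          vecMulVec (maxEntVec E) (star (maxEntVec E)))
      ≤ √(1 - ‖star (maxEntVec E) ⬝ᵥ vec (U * X)‖ ^ 2) := by
        linarith [traceNorm_vecMulVec_sub_vecMulVec_le unit_vec
          (star_maxEntVec_dotProduct_self hE)]
    _ ≤ √(1 - 2 ^ entropy (Xᴴ * X) / Fintype.card n) := by
        rw [overlap_sq]
        gcongr
        exact two_rpow_entropy_le_traceNorm_sq hX

theorem conjTranspose_submatrix_one_mul_self {R l : Type*} [Semiring R] [StarRing R]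
    [DecidableEq n] [DecidableEq l] {f : l → n} (hf : f.Injective) :
    ((1 : Matrix n n R).submatrix id f)ᴴ * (1 : Matrix n n R).submatrix id f = 1 := by
  rw [conjTranspose_submatrix, conjTranspose_one, ← submatrix_mul _ _ _ _ _ Function.bijective_id,
    Matrix.one_mul, submatrix_one _ hf]

theorem maxEnt_eq_vecMulVec_maxEntVec {dA dB : ℕ} (h : dA ≤ dB) :
    maxEnt dA dB =
      vecMulVec (maxEntVec ((1 : Matrix (Fin dB) (Fin dB) ℂ).submatrix id (Fin.castLE h)))
        (star (maxEntVec ((1 : Matrix (Fin dB) (Fin dB) ℂ).submatrix id (Fin.castLE h)))) := by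
  have inv_sqrt_mul_inv_sqrt : ((√(dA : ℝ) : ℝ) : ℂ)⁻¹ * ((√(dA : ℝ) : ℝ) : ℂ)⁻¹ =
      (dA : ℂ)⁻¹ := by
    rw [← mul_inv, ← Complex.ofReal_mul, Real.mul_self_sqrt dA.cast_nonneg,
      Complex.ofReal_natCast]
  ext p q
  by_cases hp : (p.2 : ℕ) = p.1 <;> by_cases hq : (q.2 : ℕ) = q.1 <;>
    simp [maxEnt, maxEntVec, vecMulVec_apply, Matrix.one_apply, Fin.ext_iff, hp, hq,
      ← inv_sqrt_mul_inv_sqrt]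

end MaximallyEntangled

theorem stmt3_general {dA dB : ℕ} (hdAB : dA ≤ dB)
    (ψ : Matrix (Fin dA × Fin dB) (Fin dA × Fin dB) ℂ)
    (hψ : DensityMatrix ψ) (hpure : ψ.rank = 1) :
    ∃ U : Matrix (Fin dB) (Fin dB) ℂ, U ∈ Matrix.unitaryGroup (Fin dB) ℂ ∧
      (1/2) * traceNorm
        (((1 : Matrix (Fin dA) (Fin dA) ℂ) ⊗ₖ U) * ψ *
            (((1 : Matrix (Fin dA) (Fin dA) ℂ) ⊗ₖ U))ᴴ - maxEnt dA dB)
        ≤ √(1 - 2 ^ entropy (ptraceR ψ) / dA) := by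
  obtain ⟨X, hX, rfl⟩ := exists_eq_vecMulVec_vec hψ hpure
  obtain ⟨U, hU, hdist⟩ := exists_mem_unitaryGroup_half_traceNorm_sub_maxEntVec_le hX
    (conjTranspose_submatrix_one_mul_self (Fin.castLE_injective hdAB))
  rw [Fintype.card_fin] at hdist
  refine ⟨U, hU, ?_⟩
  rwa [one_kronecker_mul_vecMulVec_vec_mul, maxEnt_eq_vecMulVec_maxEntVec hdAB,
    ptraceR_vecMulVec_vec, entropy_transpose]

/-- a pure state whose reduced entropy is at least `(1 − ε) log₂ d_A`
is within trace distance `(2 ε ln d_A)^{1/4}` of the maximally entangled state, up to a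
local unitary on `B`. -/
theorem stmt3 {dA dB : ℕ} (hdA : 1 ≤ dA) (hdAB : dA ≤ dB) (ε : ℝ) (hε : ε ∈ Set.Ioo (0:ℝ) 1)
    (ψ : Matrix (Fin dA × Fin dB) (Fin dA × Fin dB) ℂ)
    (hψ : DensityMatrix ψ) (hpure : ψ.rank = 1)
    (hS : (1 - ε) * Real.logb 2 dA ≤ entropy (ptraceR ψ)) :
    ∃ U : Matrix (Fin dB) (Fin dB) ℂ, U ∈ Matrix.unitaryGroup (Fin dB) ℂ ∧
      (1/2) * traceNorm
        (((1 : Matrix (Fin dA) (Fin dA) ℂ) ⊗ₖ U) * ψ *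
            (((1 : Matrix (Fin dA) (Fin dA) ℂ) ⊗ₖ U))ᴴ - maxEnt dA dB)
        ≤ (2 * ε * Real.log dA) ^ ((1:ℝ)/4) := by
  obtain ⟨U, hU, hdist⟩ := stmt3_general hdAB ψ hψ hpure
  exact ⟨U, hU, hdist.trans (sqrt_one_sub_two_rpow_div_le (mod_cast hdA) hε.1.le hS)⟩
end
end

section
/- Let G, H be finite sets and let N be a bipartite quantum channel from matrices on ℂ^a ⊗ ℂ^b to matrices on ℂ^{a_o} ⊗ ℂ^{b_o}. Suppose given unitaries U^g on ℂ^a (g ∈ G) and V^h on ℂ^b (h ∈ H) forming unitary one-designs, i.e. (1/|G|) ∑_g U^g X (U^g)† = (Tr X)·1_a/a for every a×a matrix X and (1/|H|) ∑_h V^h Y (V^h)† = (Tr Y)·1_b/b for every b×b matrix Y, and unitaries W^{g,h} on ℂ^{a_o} and T^{g,h} on ℂ^{b_o} such that N((U^g ⊗ V^h) ρ (U^g ⊗ V^h)†) = (W^{g,h} ⊗ T^{g,h}) N(ρ) (W^{g,h} ⊗ T^{g,h})† for all ρ, g, h (bicovariance). Let θ be the state on L_A ⊗ A_o ⊗ B_o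 ⊗ L_B obtained by applying N to the input factors of Φ_{L_A A'} ⊗ Φ_{B' L_B}, where L_A ≅ ℂ^a, L_B ≅ ℂ^b and Φ denotes a maximally entangled state of full Schmidt rank; define E^g = (a²/|G|)·(U^g ⊗ 1_{L_A}) Φ_{A'' L_A} (U^g ⊗ 1_{L_A})† on A'' ⊗ L_A (A'' ≅ ℂ^a) and F^h = (b²/|H|)·(V^h ⊗ 1_{L_B}) Φ_{B'' L_B} (V^h ⊗ 1_{L_B})† on B'' ⊗ L_B (B'' ≅ ℂ^b). Then for every density matrix ρ on A'' ⊗ B'' and all g ∈ G, h ∈ H: |G|·|H|·Tr_{A'' L_A B'' L_B}[ (E^g ⊗ F^h ⊗ 1_{A_o B_o}) (ρ ⊗ θ) ] = (W^{g,h} ⊗ T^{g,h})† N(ρ) (W^{g,h} ⊗ T^{g,h}); that is, a bicovariant channel is teleportation-simulable with its Choi state θ as resource. -/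
open Matrix Kronecker
open scoped ComplexOrder

noncomputable section

/-- Partial trace over the first tensor factor. -/
def ptraceL {X Y : Type*} [Fintype X] (M : Matrix (X × Y) (X × Y) ℂ) : Matrix Y Y ℂ :=
  Matrix.of fun i j => ∑ k, M (k, i) (k, j)

/-- The maximally entangled state of Schmidt rank `d` on `ℂ^d ⊗ ℂ^d`. -/
def maxEntSq (d : ℕ) : Matrix (Fin d × Fin d) (Fin d × Fin d) ℂ :=
  Matrix.of fun p q => if p.2 = p.1 ∧ q.2 = q.1 then ((d : ℂ))⁻¹ else 0

/-- Reordering `(A'' L_A B'' L_B)(A_o B_o) ≃ (A'' B'')(L_A A_o B_o L_B)`. -/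
def teleEquiv (A'' LA B'' LB Ao Bo : Type*) :
    (((A'' × LA) × (B'' × LB)) × (Ao × Bo)) ≃ ((A'' × B'') × ((LA × Ao) × (Bo × LB))) where
  toFun x := ((x.1.1.1, x.1.2.1), ((x.1.1.2, x.2.1), (x.2.2, x.1.2.2)))
  invFun y := (((y.1.1, y.2.1.1), (y.1.2, y.2.2.2)), (y.2.1.2, y.2.2.1))
  left_inv _ := rfl
  right_inv _ := rfl

/-!
Vectorising matrices turns `(U ⊗ 1) Φ (U ⊗ 1)ᴴ` into a multiple of the rank-one matrix
`|U⟩⟩⟨⟨U|`, and tensor products of such matrices are again of this form, for `U ⊗ V`. Contracting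
`|P⟩⟩⟨⟨P|` with `ρ` and the Choi matrix of `N` sums `(Pᴴ ρ P) p q • N |p⟩⟨q|` over all `p` and `q`,
which gives `N (Pᴴ ρ P)`. So outcome `(g, h)` of the measurement leaves `N` applied to `ρ`
conjugated by `(U g ⊗ V h)ᴴ`, and covariance moves this conjugation to the output.
-/

section PartialTrace

variable {X X' Y : Type*} [Fintype X] [Fintype X']

lemma ptraceL_smul (c : ℂ) (M : Matrix (X × Y) (X × Y) ℂ) : ptraceL (c • M) = c • ptraceL M := by
  ext i j
  simp only [ptraceL, of_apply, Matrix.smul_apply, Finset.smul_sum]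

lemma ptraceL_submatrix_map_equiv (e : X' ≃ X) (M : Matrix (X × Y) (X × Y) ℂ) :
    ptraceL (M.submatrix (Prod.map e id) (Prod.map e id)) = ptraceL M := by
  ext i j
  exact e.sum_comp fun k => M (k, i) (k, j)

lemma ptraceL_kronecker_one_mul_apply [Fintype Y] [DecidableEq Y] (A : Matrix X X ℂ)
    (M : Matrix (X × Y) (X × Y) ℂ) (i j : Y) :
    ptraceL ((A ⊗ₖ (1 : Matrix Y Y ℂ)) * M) i j = ∑ k, ∑ k', A k k' * M (k', i) (k, j) := by
  simp [ptraceL, mul_apply, Fintype.sum_prod_type, one_apply]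

lemma ptraceL_submatrix_kronecker_one_mul [Fintype Y] [DecidableEq Y] (e : X' ≃ X)
    (A : Matrix X X ℂ) (M : Matrix (X × Y) (X × Y) ℂ) :
    ptraceL ((A.submatrix e e ⊗ₖ (1 : Matrix Y Y ℂ)) *
        M.submatrix (Prod.map e id) (Prod.map e id)) =
      ptraceL ((A ⊗ₖ (1 : Matrix Y Y ℂ)) * M) := by
  rw [kroneckerMap_submatrix_left, ← ptraceL_submatrix_map_equiv e]
  congr 1
  exact submatrix_mul_equiv _ _ _ (e.prodCongr (Equiv.refl Y)) _

end PartialTrace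

section Vectorization

variable {k l m n : Type*}

/-- The unnormalised rank-one matrix `|P⟩⟩⟨⟨P|`, with `|P⟩⟩ = ∑ P x y |x⟩ ⊗ |y⟩`. The transpose
compensates for `Matrix.vec` listing the column index first. -/
def vecProj (P : Matrix m k ℂ) : Matrix (m × k) (m × k) ℂ :=
  vecMulVec (vec Pᵀ) (star (vec Pᵀ))

lemma vecProj_apply (P : Matrix m k ℂ) (x y : m × k) :
    vecProj P x y = P x.1 x.2 * star (P y.1 y.2) :=
  rfl

lemma kronecker_one_mul_vecProj_mul [Fintype m] [Fintype k] [DecidableEq k]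
    (U : Matrix l m ℂ) (P : Matrix m k ℂ) :
    (U ⊗ₖ (1 : Matrix k k ℂ)) * vecProj P * (U ⊗ₖ (1 : Matrix k k ℂ))ᴴ = vecProj (U * P) := by
  rw [vecProj, mul_vecMulVec, vecMulVec_mul, ← star_mulVec, kronecker_mulVec_vec, Matrix.one_mul,
    ← transpose_mul, vecProj]

lemma vecProj_kronecker_vecProj (P : Matrix m k ℂ) (Q : Matrix n l ℂ) :
    vecProj P ⊗ₖ vecProj Q =
      (vecProj (P ⊗ₖ Q)).submatrix (Equiv.prodProdProdComm m k n l)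
        (Equiv.prodProdProdComm m k n l) := by
  ext x y
  simp only [kroneckerMap_apply, vecProj_apply, submatrix_apply, Equiv.prodProdProdComm_apply,
    star_mul']
  ring

end Vectorization

section Choi

variable {k m n : Type*} [DecidableEq k]

/-- The unnormalised Choi matrix `∑ |p⟩⟨q| ⊗ N |p⟩⟨q|`, with the reference system first. -/
def choiMatrix (N : Matrix k k ℂ →ₗ[ℂ] Matrix n n ℂ) : Matrix (k × n) (k × n) ℂ :=
  of fun x y => N (single x.1 y.1 1) x.2 y.2

lemma map_apply_eq_sum_choiMatrix [Fintype k] (N : Matrix k k ℂ →ₗ[ℂ] Matrix n n ℂ)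
    (M : Matrix k k ℂ) (i j : n) :
    N M i j = ∑ p, ∑ q, M p q * choiMatrix N (p, i) (q, j) := by
  have hM : M = ∑ p, ∑ q, M p q • single p q (1 : ℂ) := by
    simpa only [smul_single, smul_eq_mul, mul_one] using matrix_eq_sum_single M
  conv_lhs => rw [hM]
  simp only [map_sum, map_smul, Matrix.sum_apply, Matrix.smul_apply, smul_eq_mul, choiMatrix,
    of_apply]

theorem ptraceL_vecProj_mul_kronecker_choiMatrix [Fintype k] [Fintype m] [Fintype n]
    [DecidableEq n] (N : Matrix k k ℂ →ₗ[ℂ] Matrix n n ℂ) (P : Matrix m k ℂ) (ρ : Matrix m m ℂ) :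
    ptraceL ((vecProj P ⊗ₖ (1 : Matrix n n ℂ)) *
        (ρ ⊗ₖ choiMatrix N).submatrix (Equiv.prodAssoc m k n) (Equiv.prodAssoc m k n)) =
      N (Pᴴ * ρ * P) := by
  ext i j
  have hconj (q p : k) : (Pᴴ * ρ * P) q p = ∑ x, ∑ y, P x p * star (P y q) * ρ y x := by
    simp only [mul_apply, conjTranspose_apply, Finset.sum_mul]
    exact Finset.sum_congr rfl fun x _ => Finset.sum_congr rfl fun y _ => by ring
  calc
    _ = ∑ x, ∑ p, ∑ y, ∑ q, P x p * star (P y q) * ρ y x * choiMatrix N (q, i) (p, j) := by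
      simp only [ptraceL_kronecker_one_mul_apply, Fintype.sum_prod_type, vecProj_apply,
        submatrix_apply, Equiv.prodAssoc_apply, kroneckerMap_apply, mul_assoc]
    _ = ∑ p, ∑ q, ∑ x, ∑ y, P x p * star (P y q) * ρ y x * choiMatrix N (q, i) (p, j) := by
      rw [Finset.sum_comm]
      refine Finset.sum_congr rfl fun p _ => ?_
      exact (Finset.sum_congr rfl fun x _ => Finset.sum_comm).trans Finset.sum_comm
    _ = ∑ q, ∑ p, (Pᴴ * ρ * P) q p * choiMatrix N (q, i) (p, j) := by
      rw [Finset.sum_comm]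
      simp only [hconj, Finset.sum_mul]
    _ = N (Pᴴ * ρ * P) i j := (map_apply_eq_sum_choiMatrix N _ i j).symm

end Choi

section MaximallyEntangled

variable {d : ℕ}

lemma maxEntSq_eq_smul_vecProj_one (d : ℕ) :
    maxEntSq d = (d : ℂ)⁻¹ • vecProj (1 : Matrix (Fin d) (Fin d) ℂ) := by
  ext x y
  simp [maxEntSq, vecProj_apply, one_apply, eq_comm, ← ite_and, and_comm]

lemma maxEntSq_submatrix_mk_left (l l' : Fin d) :
    (maxEntSq d).submatrix (fun x => (l, x)) (fun x => (l', x)) = (d : ℂ)⁻¹ • single l l' 1 := by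
  ext x y
  simp [maxEntSq, single_apply, eq_comm]

lemma maxEntSq_submatrix_mk_right (l l' : Fin d) :
    (maxEntSq d).submatrix (fun x => (x, l)) (fun x => (x, l')) = (d : ℂ)⁻¹ • single l l' 1 := by
  ext x y
  simp [maxEntSq, single_apply]

/-- The measurement operator `E^g = (d² / |G|) (U^g ⊗ 1) Φ (U^g ⊗ 1)ᴴ` of the teleportation
protocol; these operators form a measurement when `U` is a unitary one-design. -/
def bellEffect {G : Type*} [Fintype G] (U : G → Matrix (Fin d) (Fin d) ℂ) (g : G) :
    Matrix (Fin d × Fin d) (Fin d × Fin d) ℂ :=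
  ((d : ℂ) ^ 2 / (Fintype.card G : ℂ)) •
    ((U g ⊗ₖ (1 : Matrix (Fin d) (Fin d) ℂ)) * maxEntSq d *
      (U g ⊗ₖ (1 : Matrix (Fin d) (Fin d) ℂ))ᴴ)

lemma bellEffect_eq_smul_vecProj {G : Type*} [Fintype G] (U : G → Matrix (Fin d) (Fin d) ℂ)
    (g : G) : bellEffect U g = ((d : ℂ) / Fintype.card G) • vecProj (U g) := by
  rw [bellEffect, maxEntSq_eq_smul_vecProj_one, Matrix.mul_smul, Matrix.smul_mul,
    kronecker_one_mul_vecProj_mul, Matrix.mul_one, smul_smul]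
  congr 1
  rw [div_mul_eq_mul_div, pow_two, mul_self_mul_inv]

end MaximallyEntangled

section Teleportation

variable {a b : ℕ} {nA nB : Type*}
  (N : Matrix (Fin a × Fin b) (Fin a × Fin b) ℂ →ₗ[ℂ] Matrix (nA × nB) (nA × nB) ℂ)

/-- The Choi state `θ` of a bipartite map on `(L_A × A_o) × (B_o × L_B)`: the resource state of the
teleportation protocol. -/
def choiState : Matrix ((Fin a × nA) × (nB × Fin b)) ((Fin a × nA) × (nB × Fin b)) ℂ :=
  extendChannel N (maxEntSq a ⊗ₖ maxEntSq b)

lemma choiState_apply (x y : (Fin a × nA) × (nB × Fin b)) :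
    choiState N x y = ((a : ℂ) * b)⁻¹ *
      choiMatrix N ((x.1.1, x.2.2), (x.1.2, x.2.1)) ((y.1.1, y.2.2), (y.1.2, y.2.1)) := by
  have hslice :
      (of fun u v : Fin a × Fin b => (maxEntSq a ⊗ₖ maxEntSq b)
        ((x.1.1, u.1), (u.2, x.2.2)) ((y.1.1, v.1), (v.2, y.2.2))) =
        ((a : ℂ) * b)⁻¹ • single (x.1.1, x.2.2) (y.1.1, y.2.2) (1 : ℂ) := by
    change (maxEntSq a).submatrix (fun u => (x.1.1, u)) (fun v => (y.1.1, v)) ⊗ₖ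
      (maxEntSq b).submatrix (fun u => (u, x.2.2)) (fun v => (v, y.2.2)) = _
    rw [maxEntSq_submatrix_mk_left, maxEntSq_submatrix_mk_right, smul_kronecker, kronecker_smul,
      smul_smul, single_kronecker_single, mul_one, mul_inv]
  simp only [choiState, extendChannel, of_apply]
  rw [hslice, map_smul, Matrix.smul_apply, smul_eq_mul, choiMatrix, of_apply]

lemma kronecker_choiState_submatrix_teleEquiv {mA mB : Type*}
    (ρ : Matrix (mA × mB) (mA × mB) ℂ) :
    (ρ ⊗ₖ choiState N).submatrix (teleEquiv mA (Fin a) mB (Fin b) nA nB)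
        (teleEquiv mA (Fin a) mB (Fin b) nA nB) =
      ((a : ℂ) * b)⁻¹ •
        ((ρ ⊗ₖ choiMatrix N).submatrix (Equiv.prodAssoc _ _ _) (Equiv.prodAssoc _ _ _)).submatrix
          (Prod.map (Equiv.prodProdProdComm mA (Fin a) mB (Fin b)) id)
          (Prod.map (Equiv.prodProdProdComm mA (Fin a) mB (Fin b)) id) := by
  ext x y
  simp only [submatrix_apply, kroneckerMap_apply, choiState_apply, Matrix.smul_apply, smul_eq_mul]
  exact mul_left_comm _ _ _

variable [Fintype nA] [Fintype nB] [DecidableEq nA] [DecidableEq nB]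

theorem ptraceL_vecProj_kronecker_mul_choiState {mA mB : Type*} [Fintype mA] [Fintype mB]
    (P : Matrix mA (Fin a) ℂ) (Q : Matrix mB (Fin b) ℂ) (ρ : Matrix (mA × mB) (mA × mB) ℂ) :
    ptraceL (((vecProj P ⊗ₖ vecProj Q) ⊗ₖ (1 : Matrix (nA × nB) (nA × nB) ℂ)) *
        (ρ ⊗ₖ choiState N).submatrix (teleEquiv mA (Fin a) mB (Fin b) nA nB)
          (teleEquiv mA (Fin a) mB (Fin b) nA nB)) =
      ((a : ℂ) * b)⁻¹ • N ((P ⊗ₖ Q)ᴴ * ρ * (P ⊗ₖ Q)) := by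
  rw [kronecker_choiState_submatrix_teleEquiv, vecProj_kronecker_vecProj, Matrix.mul_smul,
    ptraceL_smul, ptraceL_submatrix_kronecker_one_mul, ptraceL_vecProj_mul_kronecker_choiMatrix]

theorem card_smul_ptraceL_bellEffect_mul_choiState {G H : Type*} [Fintype G] [Fintype H]
    (U : G → Matrix (Fin a) (Fin a) ℂ) (V : H → Matrix (Fin b) (Fin b) ℂ)
    (ρ : Matrix (Fin a × Fin b) (Fin a × Fin b) ℂ) (g : G) (h : H) :
    ((Fintype.card G : ℂ) * (Fintype.card H : ℂ)) •
        ptraceL (((bellEffect U g ⊗ₖ bellEffect V h) ⊗ₖ (1 : Matrix (nA × nB) (nA × nB) ℂ)) *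
          (ρ ⊗ₖ choiState N).submatrix (teleEquiv (Fin a) (Fin a) (Fin b) (Fin b) nA nB)
            (teleEquiv (Fin a) (Fin a) (Fin b) (Fin b) nA nB)) =
      N ((U g ⊗ₖ V h)ᴴ * ρ * (U g ⊗ₖ V h)) := by
  rw [bellEffect_eq_smul_vecProj, bellEffect_eq_smul_vecProj, smul_kronecker, kronecker_smul,
    smul_smul, smul_kronecker, Matrix.smul_mul, ptraceL_smul,
    ptraceL_vecProj_kronecker_mul_choiState, smul_smul, smul_smul]
  rcases isEmpty_or_nonempty (Fin a × Fin b) with hempty | ⟨⟨i, j⟩⟩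
  · have hzero : (U g ⊗ₖ V h)ᴴ * ρ * (U g ⊗ₖ V h) = 0 := Subsingleton.elim _ _
    rw [hzero, map_zero, smul_zero]
  · have ha : (a : ℂ) ≠ 0 := Nat.cast_ne_zero.2 i.pos.ne'
    have hb : (b : ℂ) ≠ 0 := Nat.cast_ne_zero.2 j.pos.ne'
    have hG : (Fintype.card G : ℂ) ≠ 0 := Nat.cast_ne_zero.2 (Fintype.card_pos_iff.2 ⟨g⟩).ne'
    have hH : (Fintype.card H : ℂ) ≠ 0 := Nat.cast_ne_zero.2 (Fintype.card_pos_iff.2 ⟨h⟩).ne'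
    convert one_smul ℂ _ using 2
    field_simp

end Teleportation

lemma map_conjTranspose_mul_mul_of_covariant {m n : Type*} [Fintype m] [DecidableEq m] [Fintype n]
    [DecidableEq n] {N : Matrix m m ℂ →ₗ[ℂ] Matrix n n ℂ} {P : Matrix m m ℂ} {Q : Matrix n n ℂ}
    (hP : P ∈ unitaryGroup m ℂ) (hQ : Q ∈ unitaryGroup n ℂ)
    (hcov : ∀ ρ, N (P * ρ * Pᴴ) = Q * N ρ * Qᴴ) (ρ : Matrix m m ℂ) :
    N (Pᴴ * ρ * P) = Qᴴ * N ρ * Q := by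
  have hPP : P * Pᴴ = 1 := mem_unitaryGroup_iff.1 hP
  have hQQ : Qᴴ * Q = 1 := mem_unitaryGroup_iff'.1 hQ
  have hρ : P * (Pᴴ * ρ * P) * Pᴴ = ρ := by
    calc
      _ = (P * Pᴴ) * ρ * (P * Pᴴ) := by simp only [Matrix.mul_assoc]
      _ = ρ := by rw [hPP, Matrix.one_mul, Matrix.mul_one]
  calc
    N (Pᴴ * ρ * P) = (Qᴴ * Q) * N (Pᴴ * ρ * P) * (Qᴴ * Q) := by
      rw [hQQ, Matrix.one_mul, Matrix.mul_one]
    _ = Qᴴ * (Q * N (Pᴴ * ρ * P) * Qᴴ) * Q := by simp only [Matrix.mul_assoc]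
    _ = Qᴴ * N ρ * Q := by rw [← hcov, hρ]

theorem stmt5_general {a b : ℕ} {nA nB G H : Type*} [Fintype nA] [Fintype nB] [DecidableEq nA]
    [DecidableEq nB] [Fintype G] [Fintype H]
    (N : Matrix (Fin a × Fin b) (Fin a × Fin b) ℂ →ₗ[ℂ] Matrix (nA × nB) (nA × nB) ℂ)
    (U : G → Matrix (Fin a) (Fin a) ℂ) (V : H → Matrix (Fin b) (Fin b) ℂ)
    (Q : G → H → Matrix (nA × nB) (nA × nB) ℂ)
    (hU : ∀ g, U g ∈ unitaryGroup (Fin a) ℂ) (hV : ∀ h, V h ∈ unitaryGroup (Fin b) ℂ)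
    (hQ : ∀ g h, Q g h ∈ unitaryGroup (nA × nB) ℂ)
    (hcov : ∀ ρ g h, N ((U g ⊗ₖ V h) * ρ * (U g ⊗ₖ V h)ᴴ) = Q g h * N ρ * (Q g h)ᴴ)
    (ρ : Matrix (Fin a × Fin b) (Fin a × Fin b) ℂ) (g : G) (h : H) :
    ((Fintype.card G : ℂ) * (Fintype.card H : ℂ)) •
        ptraceL (((bellEffect U g ⊗ₖ bellEffect V h) ⊗ₖ (1 : Matrix (nA × nB) (nA × nB) ℂ)) *
          (ρ ⊗ₖ choiState N).submatrix (teleEquiv (Fin a) (Fin a) (Fin b) (Fin b) nA nB)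
            (teleEquiv (Fin a) (Fin a) (Fin b) (Fin b) nA nB)) =
      (Q g h)ᴴ * N ρ * Q g h := by
  rw [card_smul_ptraceL_bellEffect_mul_choiState]
  exact map_conjTranspose_mul_mul_of_covariant (kronecker_mem_unitary (hU g) (hV h)) (hQ g h)
    (hcov · g h) ρ

/-- a bicovariant bipartite channel is teleportation-simulable with its Choi
state `θ = (id ⊗ N ⊗ id)(Φ_{L_A A'} ⊗ Φ_{B' L_B})` as resource state:
`|G||H| Tr_{A'' L_A B'' L_B}[(E^g ⊗ F^h ⊗ 1)(ρ ⊗ θ)] = (W^{g,h} ⊗ T^{g,h})† N(ρ) (W^{g,h} ⊗ T^{g,h})`. -/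
theorem stmt5 {a b ao bo : ℕ} {G H : Type*} [Fintype G] [Fintype H]
    (N : Matrix (Fin a × Fin b) (Fin a × Fin b) ℂ →ₗ[ℂ]
      Matrix (Fin ao × Fin bo) (Fin ao × Fin bo) ℂ)
    (hN : IsQuantumChannel N)
    (U : G → Matrix (Fin a) (Fin a) ℂ) (V : H → Matrix (Fin b) (Fin b) ℂ)
    (Wm : G → H → Matrix (Fin ao) (Fin ao) ℂ) (Tm : G → H → Matrix (Fin bo) (Fin bo) ℂ)
    (hU : ∀ g, U g ∈ Matrix.unitaryGroup (Fin a) ℂ)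
    (hV : ∀ h, V h ∈ Matrix.unitaryGroup (Fin b) ℂ)
    (hW : ∀ g h, Wm g h ∈ Matrix.unitaryGroup (Fin ao) ℂ)
    (hT : ∀ g h, Tm g h ∈ Matrix.unitaryGroup (Fin bo) ℂ)
    (hUdesign : ∀ X : Matrix (Fin a) (Fin a) ℂ,
      ((Fintype.card G : ℂ))⁻¹ • ∑ g, U g * X * (U g)ᴴ
        = (X.trace / (a : ℂ)) • (1 : Matrix (Fin a) (Fin a) ℂ))
    (hVdesign : ∀ Y : Matrix (Fin b) (Fin b) ℂ,
      ((Fintype.card H : ℂ))⁻¹ • ∑ h, V h * Y * (V h)ᴴ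
        = (Y.trace / (b : ℂ)) • (1 : Matrix (Fin b) (Fin b) ℂ))
    (hcov : ∀ (ρ : Matrix (Fin a × Fin b) (Fin a × Fin b) ℂ) (g : G) (h : H),
      N ((U g ⊗ₖ V h) * ρ * ((U g ⊗ₖ V h))ᴴ)
        = (Wm g h ⊗ₖ Tm g h) * N ρ * ((Wm g h ⊗ₖ Tm g h))ᴴ) :
    ∀ (ρ : Matrix (Fin a × Fin b) (Fin a × Fin b) ℂ), DensityMatrix ρ →
    ∀ (g : G) (h : H),
      ((Fintype.card G : ℂ) * (Fintype.card H : ℂ)) •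
        ptraceL
          (((((((a : ℂ) ^ 2 / (Fintype.card G : ℂ)) •
                  ((U g ⊗ₖ (1 : Matrix (Fin a) (Fin a) ℂ)) * maxEntSq a *
                    ((U g ⊗ₖ (1 : Matrix (Fin a) (Fin a) ℂ)))ᴴ)) ⊗ₖ
                (((b : ℂ) ^ 2 / (Fintype.card H : ℂ)) •
                  ((V h ⊗ₖ (1 : Matrix (Fin b) (Fin b) ℂ)) * maxEntSq b *
                    ((V h ⊗ₖ (1 : Matrix (Fin b) (Fin b) ℂ)))ᴴ))) ⊗ₖ
              (1 : Matrix (Fin ao × Fin bo) (Fin ao × Fin bo) ℂ)) *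
            ((ρ ⊗ₖ extendChannel N (maxEntSq a ⊗ₖ maxEntSq b)).submatrix
              (teleEquiv (Fin a) (Fin a) (Fin b) (Fin b) (Fin ao) (Fin bo))
              (teleEquiv (Fin a) (Fin a) (Fin b) (Fin b) (Fin ao) (Fin bo)))))
        = ((Wm g h ⊗ₖ Tm g h))ᴴ * N ρ * (Wm g h ⊗ₖ Tm g h) := by
  intro ρ _
  exact stmt5_general N U V (fun g h => Wm g h ⊗ₖ Tm g h) hU hV
    (fun g h => kronecker_mem_unitary (hW g h) (hT g h)) hcov ρ
end
end

section
/- Let M ≥ 1, ε ∈ [0,1), and let ω be a density matrix on ℂ^M ⊗ ℂ^M satisfying Tr(Φ ω) ≥ 1 − ε, where Φ is the maximally entangled state of Schmidt rank M. Let σ be any positive semidefinite matrix on ℂ^M ⊗ ℂ^M with ‖T_B σ‖₁ ≤ 1 (i.e. σ ∈ PPT'(A:B)), and let λ ∈ ℝ be such that 2^λ σ − ω is positive semidefinite. Then λ ≥ log₂((1 − ε)·M). Equivalently, the max-Rains relative entropy R_max(A;B)_ω = min_{σ ∈ PPT'(A:B)} D_max(ω‖σ) satisfies R_max(A;B)_ω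 ≥ log₂((1 − ε)·M). -/
open Matrix
open scoped ComplexOrder

noncomputable section

/-- Partial transpose over the second tensor factor. -/
def ptB {X Y : Type*} (M : Matrix (X × Y) (X × Y) ℂ) : Matrix (X × Y) (X × Y) ℂ :=
  Matrix.of fun p q => M (p.1, q.2) (q.1, p.2)

/-!
For positive semidefinite `Φ`, the functional `X ↦ Tr(Φ X)` is monotone, so
`1 - ε ≤ Tr(Φ ω) ≤ 2 ^ λ * Tr(Φ σ)`. The partial transpose is self-adjoint for the trace pairing and
sends `Φ` to `M⁻¹ F`, where `F` is the unitary swapping the two tensor factors. Hölder's inequality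
then gives `Tr(Φ σ) = M⁻¹ Tr(F (T_B σ)) ≤ M⁻¹ ‖T_B σ‖₁ ≤ M⁻¹`.
-/

open scoped InnerProductSpace MatrixOrder Matrix.Norms.L2Operator

section TraceNorm

variable {𝕜 m n : Type*} [RCLike 𝕜] [Fintype m] [Fintype n]

theorem trace_mul_nonneg_of_posSemidef {A B : Matrix n n 𝕜} (hA : A.PosSemidef)
    (hB : B.PosSemidef) : 0 ≤ (A * B).trace := by
  classical
  obtain ⟨C, rfl⟩ := CStarAlgebra.nonneg_iff_eq_star_mul_self.mp hA.nonneg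
  rw [Matrix.mul_assoc, trace_mul_comm]
  exact (hB.mul_mul_conjTranspose_same C).trace_nonneg

theorem matrix_trace_eq_sum_inner {ι : Type*} [DecidableEq n] [Fintype ι] (A : Matrix n n 𝕜)
    (b : OrthonormalBasis ι 𝕜 (EuclideanSpace 𝕜 n)) :
    A.trace = ∑ i, ⟪b i, toEuclideanLin A (b i)⟫_𝕜 := by
  rw [← LinearMap.trace_eq_sum_inner, toEuclideanLin, toLpLin_eq_toLin, trace_toLin_eq]

theorem norm_toEuclideanLin_eigenvectorBasis [DecidableEq n] {X : Matrix m n 𝕜}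
    (hX : (Xᴴ * X).IsHermitian) (i : n) :
    ‖toEuclideanLin X (hX.eigenvectorBasis i)‖ = √(hX.eigenvalues i) := by
  rw [norm_eq_sqrt_re_inner (𝕜 := 𝕜), hX.eigenvalues_eq, ← mulVec_mulVec, dotProduct_mulVec,
    ← star_mulVec, dotProduct_comm, EuclideanSpace.inner_eq_star_dotProduct, toLpLin_apply]

theorem traceNorm_nonneg [DecidableEq n] (X : Matrix m n ℂ) : 0 ≤ traceNorm X :=
  Finset.sum_nonneg fun _ _ => Real.sqrt_nonneg _

theorem norm_trace_mul_le_l2_opNorm_mul_traceNorm [DecidableEq m] [DecidableEq n]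
    (A : Matrix n m ℂ) (X : Matrix m n ℂ) :
    ‖(A * X).trace‖ ≤ ‖A‖ * traceNorm X := by
  set v := (posSemidef_conjTranspose_mul_self X).1.eigenvectorBasis
  rw [matrix_trace_eq_sum_inner _ v, traceNorm, Finset.mul_sum]
  refine norm_sum_le_of_le _ fun i _ => ?_
  calc ‖⟪v i, toEuclideanLin (A * X) (v i)⟫_ℂ‖
      ≤ ‖v i‖ * ‖toEuclideanLin (A * X) (v i)‖ := norm_inner_le_norm _ _
    _ = ‖toEuclideanLin A (toEuclideanLin X (v i))‖ := by
      rw [v.orthonormal.1, one_mul, toLpLin_mul_same, LinearMap.comp_apply]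
    _ ≤ ‖A‖ * ‖toEuclideanLin X (v i)‖ := A.l2_opNorm_mulVec _
    _ = ‖A‖ * √((posSemidef_conjTranspose_mul_self X).1.eigenvalues i) := by
      rw [norm_toEuclideanLin_eigenvectorBasis]

end TraceNorm

theorem trace_ptB_mul_ptB {X Y : Type*} [Fintype X] [Fintype Y]
    (A B : Matrix (X × Y) (X × Y) ℂ) : (ptB A * ptB B).trace = (A * B).trace := by
  simp only [Matrix.trace, diag_apply, Matrix.mul_apply, ptB, of_apply, Fintype.sum_prod_type]
  refine Finset.sum_congr rfl fun a _ => ?_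
  rw [Finset.sum_comm_cycle]
  exact Finset.sum_congr rfl fun b _ => Finset.sum_comm

section MaximallyEntangled

variable (d : ℕ)

theorem maxEntSq_eq_smul_vecMulVec :
    maxEntSq d = (d : ℂ)⁻¹ • vecMulVec (vec 1) (star (vec 1)) := by
  ext p q
  by_cases hp : p.2 = p.1 <;> by_cases hq : q.2 = q.1 <;>
    simp [maxEntSq, vecMulVec_apply, vec, one_apply, hp, hq]

theorem posSemidef_maxEntSq : (maxEntSq d).PosSemidef := by
  rw [maxEntSq_eq_smul_vecMulVec]
  exact (posSemidef_vecMulVec_self_star _).smul (by positivity)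

theorem ptB_maxEntSq :
    ptB (maxEntSq d) = (d : ℂ)⁻¹ • Equiv.Perm.permMatrix ℂ (Equiv.prodComm (Fin d) (Fin d)) := by
  ext ⟨a, b⟩ ⟨a', b'⟩
  simp [ptB, maxEntSq, PEquiv.toMatrix_apply, and_comm, eq_comm]

theorem l2_opNorm_ptB_maxEntSq_le : ‖ptB (maxEntSq d)‖ ≤ (d : ℝ)⁻¹ := by
  rw [ptB_maxEntSq, norm_smul, norm_inv, Complex.norm_natCast]
  exact mul_le_of_le_one_right (by positivity) (permMatrix_l2_opNorm_le _)

theorem norm_trace_maxEntSq_mul_le (X : Matrix (Fin d × Fin d) (Fin d × Fin d) ℂ) :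
    ‖(maxEntSq d * X).trace‖ ≤ (d : ℝ)⁻¹ * traceNorm (ptB X) :=
  calc ‖(maxEntSq d * X).trace‖
      = ‖(ptB (maxEntSq d) * ptB X).trace‖ := by rw [trace_ptB_mul_ptB]
    _ ≤ ‖ptB (maxEntSq d)‖ * traceNorm (ptB X) := norm_trace_mul_le_l2_opNorm_mul_traceNorm _ _
    _ ≤ (d : ℝ)⁻¹ * traceNorm (ptB X) :=
      mul_le_mul_of_nonneg_right (l2_opNorm_ptB_maxEntSq_le d) (traceNorm_nonneg _)

end MaximallyEntangled

theorem stmt8_general {M : ℕ} {ε : ℝ} (hε : ε < 1)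
    {ω σ : Matrix (Fin M × Fin M) (Fin M × Fin M) ℂ}
    (hfid : 1 - ε ≤ ((maxEntSq M * ω).trace).re) (hppt : traceNorm (ptB σ) ≤ 1)
    {lam : ℝ} (hlam : ((((2 : ℝ) ^ lam : ℝ) : ℂ) • σ - ω).PosSemidef) :
    Real.logb 2 ((1 - ε) * M) ≤ lam := by
  have fidelity_le : ((maxEntSq M * ω).trace).re ≤ 2 ^ lam * ((maxEntSq M * σ).trace).re := by
    have h := (Complex.nonneg_iff.mp
      (trace_mul_nonneg_of_posSemidef (posSemidef_maxEntSq M) hlam)).1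
    rwa [mul_sub, Matrix.mul_smul, trace_sub, trace_smul, smul_eq_mul, Complex.sub_re,
      Complex.re_ofReal_mul, sub_nonneg] at h
  have overlap_le : ((maxEntSq M * σ).trace).re ≤ (M : ℝ)⁻¹ :=
    calc ((maxEntSq M * σ).trace).re ≤ ‖(maxEntSq M * σ).trace‖ := Complex.re_le_norm _
      _ ≤ (M : ℝ)⁻¹ * traceNorm (ptB σ) := norm_trace_maxEntSq_mul_le M σ
      _ ≤ (M : ℝ)⁻¹ := mul_le_of_le_one_right (by positivity) hppt
  have one_sub_le : 1 - ε ≤ 2 ^ lam / M :=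
    hfid.trans (fidelity_le.trans (mul_le_mul_of_nonneg_left overlap_le (by positivity)))
  have hM : (0 : ℝ) < M := by
    refine M.cast_nonneg.lt_of_ne' fun hM => ?_
    rw [hM, div_zero] at one_sub_le
    linarith
  rw [Real.logb_le_iff_le_rpow one_lt_two (mul_pos (sub_pos.mpr hε) hM)]
  exact (le_div_iff₀ hM).mp one_sub_le

/-- if `Tr(Φ ω) ≥ 1 − ε`, `σ ∈ PPT'` and `2^λ σ − ω ⪰ 0`, then
`λ ≥ log₂((1 − ε) M)`; i.e. the max-Rains relative entropy of `ω` is at least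
`log₂((1 − ε) M)`. -/
theorem stmt8 {M : ℕ} (hM : 1 ≤ M) (ε : ℝ) (hε : ε ∈ Set.Ico (0:ℝ) 1)
    (ω : Matrix (Fin M × Fin M) (Fin M × Fin M) ℂ) (hω : DensityMatrix ω)
    (hfid : 1 - ε ≤ ((maxEntSq M * ω).trace).re)
    (σ : Matrix (Fin M × Fin M) (Fin M × Fin M) ℂ) (hσ : σ.PosSemidef)
    (hppt : traceNorm (ptB σ) ≤ 1)
    (lam : ℝ) (hlam : ((((2:ℝ) ^ lam : ℝ) : ℂ) • σ - ω).PosSemidef) :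
    Real.logb 2 ((1 - ε) * M) ≤ lam := by
  exact stmt8_general hε.2 hfid hppt hlam
end
end

section
/- Define two quantum channels M¹, M² from 4×4 matrices (input basis |00⟩,|01⟩,|10⟩,|11⟩ of ℂ² ⊗ ℂ²) to 2×2 matrices by M^x(ρ) = ∑_{j=1}^{5} A^x_j ρ (A^x_j)†, with Kraus operators A¹₁ = |0⟩⟨00|, A¹₂ = |0⟩⟨01|, A¹₃ = |0⟩⟨10|, A¹₄ = (1/√2)|0⟩⟨11|, A¹₅ = (1/√2)|1⟩⟨11|, and A²₁ = |+⟩⟨00|, A²₂ = |+⟩⟨01|, A²₃ = |1⟩⟨1+|, A²₄ = (1/√2)|0⟩⟨1−|, A²₅ = (1/√2)|1⟩⟨1−|, where |±⟩ = (|0⟩ ± |1⟩)/√2, |1+⟩ = |1⟩⊗|+⟩, |1−⟩ = |1⟩⊗|−⟩. Then for every n ≥ 1, all sequences x, y ∈ {1,2}ⁿ with x ≠ y, every finite reference dimension r ≥ 1, and every density matrix σ on ℂ^r ⊗ (ℂ⁴)^{⊗n}: Tr[ (id_r ⊗ M^{x₁} ⊗ ⋯ ⊗ M^{xₙ})(σ)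 · (id_r ⊗ M^{y₁} ⊗ ⋯ ⊗ M^{yₙ})(σ) ] > 0. In other words, no input state makes the outputs of the two channel sequences orthogonal, so the sequences can never be perfectly discriminated by a non-adaptive strategy. -/
open Matrix
open scoped ComplexOrder

noncomputable section

/-- `|0⟩`. -/
def v0 : Fin 2 → ℂ := fun b => if b = 0 then 1 else 0
/-- `|1⟩`. -/
def v1 : Fin 2 → ℂ := fun b => if b = 1 then 1 else 0
/-- `|+⟩`. -/
def vp : Fin 2 → ℂ := fun _ => ((Real.sqrt 2 : ℝ) : ℂ)⁻¹
/-- `|−⟩`. -/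
def vm : Fin 2 → ℂ := fun b =>
  if b = 0 then ((Real.sqrt 2 : ℝ) : ℂ)⁻¹ else -((Real.sqrt 2 : ℝ) : ℂ)⁻¹

/-- `⟨00|`, etc., as vectors on `ℂ² ⊗ ℂ²` (all real, so no conjugation is needed). -/
def w00 : Fin 2 × Fin 2 → ℂ := fun p => v0 p.1 * v0 p.2
def w01 : Fin 2 × Fin 2 → ℂ := fun p => v0 p.1 * v1 p.2
def w10 : Fin 2 × Fin 2 → ℂ := fun p => v1 p.1 * v0 p.2
def w11 : Fin 2 × Fin 2 → ℂ := fun p => v1 p.1 * v1 p.2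
def w1p : Fin 2 × Fin 2 → ℂ := fun p => v1 p.1 * vp p.2
def w1m : Fin 2 × Fin 2 → ℂ := fun p => v1 p.1 * vm p.2

/-- The Kraus operators `A^x_j` of the two channels `M¹` (`x = 0`) and `M²` (`x = 1`). -/
def Ak : Fin 2 → Fin 5 → Matrix (Fin 2) (Fin 2 × Fin 2) ℂ := fun x =>
  if x = 0 then
    ![Matrix.vecMulVec v0 w00, Matrix.vecMulVec v0 w01, Matrix.vecMulVec v0 w10,
      ((Real.sqrt 2 : ℝ) : ℂ)⁻¹ • Matrix.vecMulVec v0 w11,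
      ((Real.sqrt 2 : ℝ) : ℂ)⁻¹ • Matrix.vecMulVec v1 w11]
  else
    ![Matrix.vecMulVec vp w00, Matrix.vecMulVec vp w01, Matrix.vecMulVec v1 w1p,
      ((Real.sqrt 2 : ℝ) : ℂ)⁻¹ • Matrix.vecMulVec v0 w1m,
      ((Real.sqrt 2 : ℝ) : ℂ)⁻¹ • Matrix.vecMulVec v1 w1m]

/-- Joint Kraus operator of `id_r ⊗ M^{x₁} ⊗ ⋯ ⊗ M^{xₙ}` labelled by `j : Fin n → Fin 5`. -/
def bigK (r n : ℕ) (x : Fin n → Fin 2) (j : Fin n → Fin 5) :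
    Matrix (Fin r × (Fin n → Fin 2)) (Fin r × (Fin n → Fin 2 × Fin 2)) ℂ :=
  Matrix.of fun p q => (if p.1 = q.1 then 1 else 0) * ∏ i, Ak (x i) (j i) (p.2 i) (q.2 i)

/-- The output `(id_r ⊗ M^{x₁} ⊗ ⋯ ⊗ M^{xₙ})(σ)`. -/
def outState (r n : ℕ) (x : Fin n → Fin 2)
    (σ : Matrix (Fin r × (Fin n → Fin 2 × Fin 2)) (Fin r × (Fin n → Fin 2 × Fin 2)) ℂ) :
    Matrix (Fin r × (Fin n → Fin 2)) (Fin r × (Fin n → Fin 2)) ℂ :=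
  ∑ j : Fin n → Fin 5, bigK r n x j * σ * (bigK r n x j)ᴴ

/-!
For channels `𝒜, ℬ` with Kraus operators `A_j, B_k` and an input `σ = S† S`, the outputs overlap
by `Tr[𝒜(σ) ℬ(σ)] = ∑_{j,k} ‖S A_j† B_k S†‖²` (Frobenius norm). If this vanished, then
`S X S† = 0` for all `X` in the span of the operators `A_j† B_k`, and a positive definite `X` in
that span would force `σ = 0`. Such an `X` exists for every pair taken from `M¹, M²`, and tensor
products of positive definite matrices are positive definite, so the obstruction passes to all
channel sequences and reference systems.
-/

open scoped Kronecker

section PosSemidef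

variable {𝕜 m n : Type*} [RCLike 𝕜] [Fintype n]

theorem exists_eq_conjTranspose_mul_self {σ : Matrix n n 𝕜} (hσ : σ.PosSemidef) :
    ∃ S : Matrix n n 𝕜, σ = Sᴴ * S := by
  classical
  open scoped MatrixOrder in
  exact CStarAlgebra.nonneg_iff_eq_star_mul_self.mp hσ.nonneg

theorem eq_zero_of_mul_posDef_mul_conjTranspose_eq_zero {S : Matrix m n 𝕜}
    {P : Matrix n n 𝕜} (hP : P.PosDef) (h : S * P * Sᴴ = 0) : S = 0 := by
  funext i
  have hform : star (star (S i)) ⬝ᵥ P *ᵥ star (S i) = 0 := calc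
    star (star (S i)) ⬝ᵥ P *ᵥ star (S i) = (S * (P * Sᴴ)) i i := by rw [star_star]; rfl
    _ = 0 := by rw [← Matrix.mul_assoc, h, Matrix.zero_apply]
  by_contra hrow
  exact (hP.dotProduct_mulVec_pos (star_ne_zero.2 hrow)).ne' hform

end PosSemidef

section KrausMaps

variable {𝕜 κ κ' m n : Type*} [RCLike 𝕜] [Fintype m]

/-- The span of the products `A_j† B_k` of two Kraus families; it decides whether some input makes
the two outputs orthogonal. -/
def overlapSpan (A : κ → Matrix m n 𝕜) (B : κ' → Matrix m n 𝕜) : Submodule 𝕜 (Matrix n n 𝕜) :=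
  Submodule.span 𝕜 (Set.range fun p : κ × κ' => (A p.1)ᴴ * B p.2)

theorem conjTranspose_mul_mem_overlapSpan (A : κ → Matrix m n 𝕜) (B : κ' → Matrix m n 𝕜)
    (j : κ) (k : κ') : (A j)ᴴ * B k ∈ overlapSpan A B :=
  Submodule.subset_span ⟨(j, k), rfl⟩

theorem one_mem_overlapSpan_self [Fintype κ] [DecidableEq n] {A : κ → Matrix m n 𝕜}
    (hA : ∑ j, (A j)ᴴ * A j = 1) : 1 ∈ overlapSpan A A :=
  hA ▸ sum_mem fun j _ => conjTranspose_mul_mem_overlapSpan A A j j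

theorem conjTranspose_mem_overlapSpan {A : κ → Matrix m n 𝕜} {B : κ' → Matrix m n 𝕜}
    {X : Matrix n n 𝕜} (hX : X ∈ overlapSpan A B) : Xᴴ ∈ overlapSpan B A := by
  induction hX using Submodule.span_induction with
  | mem X hX =>
    obtain ⟨⟨j, k⟩, rfl⟩ := hX
    simpa only [conjTranspose_mul, conjTranspose_conjTranspose] using
      conjTranspose_mul_mem_overlapSpan B A k j
  | zero => simp only [conjTranspose_zero, zero_mem]
  | add X Y _ _ hX hY => simpa only [conjTranspose_add] using add_mem hX hY
  | smul c X _ hX => simpa only [conjTranspose_smul] using Submodule.smul_mem _ _ hX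

theorem one_kronecker_mem_overlapSpan {ρ : Type*} [Fintype ρ] [DecidableEq ρ]
    {A : κ → Matrix m n 𝕜} {B : κ' → Matrix m n 𝕜} {X : Matrix n n 𝕜}
    (hX : X ∈ overlapSpan A B) :
    (1 : Matrix ρ ρ 𝕜) ⊗ₖ X ∈
      overlapSpan (fun j => (1 : Matrix ρ ρ 𝕜) ⊗ₖ A j) (fun k => (1 : Matrix ρ ρ 𝕜) ⊗ₖ B k) := by
  induction hX using Submodule.span_induction with
  | mem X hX =>
    obtain ⟨⟨j, k⟩, rfl⟩ := hX
    simpa only [conjTranspose_kronecker, conjTranspose_one, ← mul_kronecker_mul, one_mul] using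
      conjTranspose_mul_mem_overlapSpan (fun j => (1 : Matrix ρ ρ 𝕜) ⊗ₖ A j)
        (fun k => (1 : Matrix ρ ρ 𝕜) ⊗ₖ B k) j k
  | zero => simp only [kronecker_zero, zero_mem]
  | add X Y _ _ hX hY => simpa only [kronecker_add] using add_mem hX hY
  | smul c X _ hX => simpa only [kronecker_smul] using Submodule.smul_mem _ _ hX

theorem vecMulVec_mem_overlapSpan {A : κ → Matrix m n 𝕜} {B : κ' → Matrix m n 𝕜} {j : κ} {k : κ'}
    {a b : 𝕜} {u v : m → 𝕜} {w z : n → 𝕜} (hA : A j = a • vecMulVec u (star w))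
    (hB : B k = b • vecMulVec v z) (hne : star a * b * (star u ⬝ᵥ v) ≠ 0) :
    vecMulVec w z ∈ overlapSpan A B := by
  have hprod : (A j)ᴴ * B k = (star a * b * (star u ⬝ᵥ v)) • vecMulVec w z := by
    rw [hA, hB, conjTranspose_smul, conjTranspose_vecMulVec, star_star, Matrix.smul_mul,
      Matrix.mul_smul, vecMulVec_mul_vecMulVec, vecMulVec_smul, smul_smul, smul_smul]
  rw [← Submodule.smul_mem_iff _ hne, ← hprod]
  exact conjTranspose_mul_mem_overlapSpan A B j k

theorem mul_mul_eq_zero_of_mem_overlapSpan [Fintype n] {l l' : Type*}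
    {A : κ → Matrix m n 𝕜} {B : κ' → Matrix m n 𝕜} {S : Matrix l n 𝕜} {T : Matrix n l' 𝕜}
    (h : ∀ j k, S * ((A j)ᴴ * B k) * T = 0) {X : Matrix n n 𝕜} (hX : X ∈ overlapSpan A B) :
    S * X * T = 0 := by
  induction hX using Submodule.span_induction with
  | mem X hX =>
    obtain ⟨⟨j, k⟩, rfl⟩ := hX
    exact h j k
  | zero => simp only [Matrix.mul_zero, Matrix.zero_mul]
  | add X Y _ _ hX hY => simp only [Matrix.mul_add, Matrix.add_mul, hX, hY, add_zero]
  | smul c X _ hX => simp only [Matrix.mul_smul, Matrix.smul_mul, hX, smul_zero]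

variable [Fintype κ] [Fintype κ'] [Fintype n]

/-- The completely positive map `σ ↦ ∑ j, A_j σ A_j†` with Kraus family `A`. -/
def krausMap (A : κ → Matrix m n 𝕜) (σ : Matrix n n 𝕜) : Matrix m m 𝕜 :=
  ∑ j, A j * σ * (A j)ᴴ

theorem trace_krausMap_mul_krausMap (A : κ → Matrix m n 𝕜) (B : κ' → Matrix m n 𝕜)
    {l : Type*} [Fintype l] (S : Matrix l n 𝕜) :
    (krausMap A (Sᴴ * S) * krausMap B (Sᴴ * S)).trace =
      ∑ j, ∑ k, (S * ((A j)ᴴ * B k) * Sᴴ * (S * ((A j)ᴴ * B k) * Sᴴ)ᴴ).trace := by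
  simp only [krausMap, Finset.sum_mul_sum, trace_sum]
  refine Finset.sum_congr rfl fun j _ => Finset.sum_congr rfl fun k _ => ?_
  calc (A j * (Sᴴ * S) * (A j)ᴴ * (B k * (Sᴴ * S) * (B k)ᴴ)).trace
      = ((A j * Sᴴ) * (S * ((A j)ᴴ * B k) * Sᴴ * (S * (B k)ᴴ))).trace := by
        simp only [Matrix.mul_assoc]
    _ = ((S * ((A j)ᴴ * B k) * Sᴴ * (S * (B k)ᴴ)) * (A j * Sᴴ)).trace := trace_mul_comm _ _
    _ = (S * ((A j)ᴴ * B k) * Sᴴ * (S * ((A j)ᴴ * B k) * Sᴴ)ᴴ).trace := by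
        simp only [conjTranspose_mul, conjTranspose_conjTranspose, Matrix.mul_assoc]

theorem trace_krausMap_mul_krausMap_pos {A : κ → Matrix m n 𝕜} {B : κ' → Matrix m n 𝕜}
    {P σ : Matrix n n 𝕜} (hP : P.PosDef) (hPspan : P ∈ overlapSpan A B)
    (hσ : σ.PosSemidef) (hσ0 : σ ≠ 0) : 0 < (krausMap A σ * krausMap B σ).trace := by
  obtain ⟨S, rfl⟩ := exists_eq_conjTranspose_mul_self hσ
  rw [trace_krausMap_mul_krausMap]
  have hterm (j : κ) (k : κ') :
      0 ≤ (S * ((A j)ᴴ * B k) * Sᴴ * (S * ((A j)ᴴ * B k) * Sᴴ)ᴴ).trace :=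
    (posSemidef_self_mul_conjTranspose _).trace_nonneg
  have hrow (j : κ) :
      0 ≤ ∑ k, (S * ((A j)ᴴ * B k) * Sᴴ * (S * ((A j)ᴴ * B k) * Sᴴ)ᴴ).trace :=
    Fintype.sum_nonneg (hterm j)
  refine (Fintype.sum_nonneg hrow).lt_of_ne' fun hsum => hσ0 ?_
  have hzero (j : κ) (k : κ') : S * ((A j)ᴴ * B k) * Sᴴ = 0 :=
    trace_mul_conjTranspose_self_eq_zero_iff.1 <| congrFun
      ((Fintype.sum_eq_zero_iff_of_nonneg (hterm j)).1
        (congrFun ((Fintype.sum_eq_zero_iff_of_nonneg hrow).1 hsum) j)) k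
  have hS : S = 0 := eq_zero_of_mul_posDef_mul_conjTranspose_eq_zero hP
    (mul_mul_eq_zero_of_mem_overlapSpan hzero hPspan)
  rw [hS, Matrix.mul_zero]

end KrausMaps

section PiTensor

variable {ι R : Type*} [Fintype ι] {α β γ κ κ' : ι → Type*}

/-- The tensor product `M₁ ⊗ ⋯ ⊗ Mₙ` of a finite family of matrices, with multi-indices as
row and column indices. -/
def piTensor [CommMonoid R] (M : ∀ i, Matrix (α i) (β i) R) :
    Matrix (∀ i, α i) (∀ i, β i) R :=
  Matrix.of fun p q => ∏ i, M i (p i) (q i)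

theorem piTensor_mul [CommSemiring R] [DecidableEq ι] [∀ i, Fintype (β i)]
    (M : ∀ i, Matrix (α i) (β i) R) (N : ∀ i, Matrix (β i) (γ i) R) :
    piTensor M * piTensor N = piTensor fun i => M i * N i := by
  ext p q
  simp only [piTensor, mul_apply, of_apply, Finset.prod_univ_sum, Fintype.piFinset_univ,
    Finset.prod_mul_distrib]

theorem conjTranspose_piTensor [CommSemiring R] [StarRing R] (M : ∀ i, Matrix (α i) (β i) R) :
    (piTensor M)ᴴ = piTensor fun i => (M i)ᴴ := by
  ext p q
  simp only [piTensor, conjTranspose_apply, of_apply, star_prod]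

theorem piTensor_one [CommSemiring R] [∀ i, DecidableEq (α i)] [DecidableEq (∀ i, α i)] :
    piTensor (fun i => (1 : Matrix (α i) (α i) R)) = 1 := by
  ext p q
  simp only [piTensor, of_apply, one_apply, Finset.prod_boole, Finset.mem_univ, true_imp_iff,
    funext_iff]

theorem piTensor_sum_smul [CommSemiring R] [DecidableEq ι] [∀ i, Fintype (κ i)]
    (c : ∀ i, κ i → R) (M : ∀ i, κ i → Matrix (α i) (β i) R) :
    piTensor (fun i => ∑ k, c i k • M i k) =
      ∑ f : ∀ i, κ i, (∏ i, c i (f i)) • piTensor fun i => M i (f i) := by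
  ext p q
  simp only [piTensor, of_apply, Matrix.sum_apply, Matrix.smul_apply, smul_eq_mul,
    Finset.prod_univ_sum, Fintype.piFinset_univ, Finset.prod_mul_distrib]

variable {𝕜 : Type*} [RCLike 𝕜]

theorem posDef_piTensor [∀ i, Finite (α i)] {P : ∀ i, Matrix (α i) (α i) 𝕜}
    (hP : ∀ i, (P i).PosDef) : (piTensor P).PosDef := by
  classical
  have := fun i => Fintype.ofFinite (α i)
  choose S hS using fun i => exists_eq_conjTranspose_mul_self (hP i).posSemidef
  have hsemidef : (piTensor P).PosSemidef := by
    rw [funext hS, ← piTensor_mul, ← conjTranspose_piTensor]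
    exact posSemidef_conjTranspose_mul_self _
  have hunit : piTensor P * piTensor (fun i => (P i)⁻¹) = 1 := by
    simp only [piTensor_mul, mul_nonsing_inv _ ((isUnit_iff_isUnit_det _).1 (hP _).isUnit),
      piTensor_one]
  exact hsemidef.posDef_iff_isUnit.2 (IsUnit.of_mul_eq_one _ hunit)

theorem piTensor_mem_overlapSpan [∀ i, Fintype (α i)] [∀ i, Finite (κ i)] [∀ i, Finite (κ' i)]
    [DecidableEq ι] {A : ∀ i, κ i → Matrix (α i) (β i) 𝕜}
    {B : ∀ i, κ' i → Matrix (α i) (β i) 𝕜} {X : ∀ i, Matrix (β i) (β i) 𝕜}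
    (hX : ∀ i, X i ∈ overlapSpan (A i) (B i)) :
    piTensor X ∈ overlapSpan (fun j : ∀ i, κ i => piTensor fun i => A i (j i))
      (fun k : ∀ i, κ' i => piTensor fun i => B i (k i)) := by
  have := fun i => Fintype.ofFinite (κ i)
  have := fun i => Fintype.ofFinite (κ' i)
  choose c hc using fun i => (Submodule.mem_span_range_iff_exists_fun 𝕜).1 (hX i)
  rw [← funext hc, piTensor_sum_smul]
  refine sum_mem fun f _ => Submodule.smul_mem _ _ ?_
  rw [← piTensor_mul, ← conjTranspose_piTensor]
  exact conjTranspose_mul_mem_overlapSpan (fun j : ∀ i, κ i => piTensor fun i => A i (j i))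
    (fun k : ∀ i, κ' i => piTensor fun i => B i (k i)) (fun i => (f i).1) (fun i => (f i).2)

end PiTensor

theorem inv_sqrt_two_mul_self :
    ((Real.sqrt 2 : ℝ) : ℂ)⁻¹ * ((Real.sqrt 2 : ℝ) : ℂ)⁻¹ = 1 / 2 := by
  rw [← mul_inv, ← Complex.ofReal_mul, Real.mul_self_sqrt zero_le_two]
  norm_num

theorem sum_conjTranspose_Ak_mul_Ak (a : Fin 2) : ∑ j, (Ak a j)ᴴ * Ak a j = 1 := by
  have hinv := inv_sqrt_two_mul_self
  ext ⟨p, p'⟩ ⟨q, q'⟩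
  fin_cases a <;> fin_cases p <;> fin_cases p' <;> fin_cases q <;> fin_cases q' <;>
    simp [Ak, Fin.sum_univ_succ, mul_apply, vecMulVec_apply, one_apply,
      w00, w01, w10, w11, w1p, w1m, v0, v1, vp, vm] <;>
    grind

/-- A positive definite matrix in the overlap span of `M¹` and `M²`: the quadratic form
`u ↦ |u₀₀|² + |u₀₁|² + |u₁₀ - u₁₁|² + |u₁₁|²`. -/
def overlapWitness : Matrix (Fin 2 × Fin 2) (Fin 2 × Fin 2) ℂ :=
  (transvection (1, 0) (1, 1) (-1))ᴴ * transvection (1, 0) (1, 1) (-1)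

theorem posDef_overlapWitness : overlapWitness.PosDef :=
  .conjTranspose_mul_self _ <| mulVec_injective_of_isUnit <| (isUnit_iff_isUnit_det _).2 <| by
    rw [det_transvection_of_ne _ _ (by decide)]
    exact isUnit_one

theorem overlapWitness_eq_sum_vecMulVec :
    overlapWitness = vecMulVec w00 w00 + vecMulVec w01 w01
      + ((Real.sqrt 2 : ℝ) : ℂ) • vecMulVec w10 w1m
      + ((Real.sqrt 2 : ℝ) : ℂ)⁻¹ • vecMulVec w11 w1p
      - (3 * ((Real.sqrt 2 : ℝ) : ℂ)⁻¹) • vecMulVec w11 w1m := by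
  have hinv := inv_sqrt_two_mul_self
  have hsqrt : ((Real.sqrt 2 : ℝ) : ℂ) ≠ 0 := by simp
  ext ⟨p, p'⟩ ⟨q, q'⟩
  fin_cases p <;> fin_cases p' <;> fin_cases q <;> fin_cases q' <;>
    simp [overlapWitness, transvection, single_apply, one_apply, mul_apply, vecMulVec_apply,
      Fintype.sum_prod_type, w00, w01, w10, w11, w1p, w1m, v0, v1, vp, vm] <;>
    grind

theorem star_w00 : star w00 = w00 := by
  ext ⟨a, b⟩
  fin_cases a <;> fin_cases b <;> simp [w00, v0]

theorem star_w01 : star w01 = w01 := by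
  ext ⟨a, b⟩
  fin_cases a <;> fin_cases b <;> simp [w01, v0, v1]

theorem star_w10 : star w10 = w10 := by
  ext ⟨a, b⟩
  fin_cases a <;> fin_cases b <;> simp [w10, v0, v1]

theorem star_w11 : star w11 = w11 := by
  ext ⟨a, b⟩
  fin_cases a <;> fin_cases b <;> simp [w11, v1]

theorem overlapWitness_mem_overlapSpan : overlapWitness ∈ overlapSpan (Ak 0) (Ak 1) := by
  have h00 : vecMulVec w00 w00 ∈ overlapSpan (Ak 0) (Ak 1) :=
    vecMulVec_mem_overlapSpan (j := 0) (k := 0) (a := 1) (b := 1) (u := v0) (v := vp)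
      (by simp [Ak, star_w00]) (by simp [Ak]) (by simp [v0, vp])
  have h01 : vecMulVec w01 w01 ∈ overlapSpan (Ak 0) (Ak 1) :=
    vecMulVec_mem_overlapSpan (j := 1) (k := 1) (a := 1) (b := 1) (u := v0) (v := vp)
      (by simp [Ak, star_w01]) (by simp [Ak]) (by simp [v0, vp])
  have h10m : vecMulVec w10 w1m ∈ overlapSpan (Ak 0) (Ak 1) :=
    vecMulVec_mem_overlapSpan (j := 2) (k := 3) (a := 1) (u := v0) (v := v0)
      (by simp [Ak, star_w10]) rfl (by simp [v0])
  have h11m : vecMulVec w11 w1m ∈ overlapSpan (Ak 0) (Ak 1) :=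
    vecMulVec_mem_overlapSpan (j := 3) (k := 3) (u := v0) (v := v0)
      (by rw [star_w11]; rfl) rfl (by simp [v0])
  have h11p : vecMulVec w11 w1p ∈ overlapSpan (Ak 0) (Ak 1) :=
    vecMulVec_mem_overlapSpan (j := 4) (k := 2) (b := 1) (u := v1) (v := v1)
      (by rw [star_w11]; rfl) (by simp [Ak]) (by simp [v1])
  rw [overlapWitness_eq_sum_vecMulVec]
  exact sub_mem (add_mem (add_mem (add_mem h00 h01) (Submodule.smul_mem _ _ h10m))
    (Submodule.smul_mem _ _ h11p)) (Submodule.smul_mem _ _ h11m)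

theorem exists_posDef_mem_overlapSpan_Ak (a b : Fin 2) :
    ∃ P : Matrix (Fin 2 × Fin 2) (Fin 2 × Fin 2) ℂ,
      P.PosDef ∧ P ∈ overlapSpan (Ak a) (Ak b) := by
  rcases eq_or_ne a b with rfl | hab
  · exact ⟨1, .one, one_mem_overlapSpan_self (sum_conjTranspose_Ak_mul_Ak a)⟩
  · obtain ⟨rfl, rfl⟩ | ⟨rfl, rfl⟩ : a = 0 ∧ b = 1 ∨ a = 1 ∧ b = 0 := by lia
    · exact ⟨overlapWitness, posDef_overlapWitness, overlapWitness_mem_overlapSpan⟩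
    · exact ⟨overlapWitnessᴴ, posDef_overlapWitness.conjTranspose,
        conjTranspose_mem_overlapSpan overlapWitness_mem_overlapSpan⟩

theorem bigK_eq_one_kronecker_piTensor (r n : ℕ) (x : Fin n → Fin 2) (j : Fin n → Fin 5) :
    bigK r n x j = (1 : Matrix (Fin r) (Fin r) ℂ) ⊗ₖ piTensor fun i => Ak (x i) (j i) := by
  ext p q
  simp only [bigK, of_apply, kroneckerMap_apply, one_apply, piTensor]

theorem exists_posDef_mem_overlapSpan_bigK (r n : ℕ) (x y : Fin n → Fin 2) :
    ∃ P : Matrix (Fin r × (Fin n → Fin 2 × Fin 2)) (Fin r × (Fin n → Fin 2 × Fin 2)) ℂ,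
      P.PosDef ∧ P ∈ overlapSpan (bigK r n x) (bigK r n y) := by
  choose P hP hPspan using fun i => exists_posDef_mem_overlapSpan_Ak (x i) (y i)
  refine ⟨1 ⊗ₖ piTensor P, PosDef.one.kronecker (posDef_piTensor hP), ?_⟩
  simpa only [← bigK_eq_one_kronecker_piTensor] using
    one_kronecker_mem_overlapSpan (ρ := Fin r) (piTensor_mem_overlapSpan hPspan)

/-- for the two channels `M¹, M²` above, no non-adaptive strategy can
perfectly discriminate different channel-sequences: the outputs are never orthogonal. -/
theorem stmt10 (n : ℕ) (hn : 1 ≤ n) (x y : Fin n → Fin 2) (hxy : x ≠ y)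
    (r : ℕ) (hr : 1 ≤ r)
    (σ : Matrix (Fin r × (Fin n → Fin 2 × Fin 2)) (Fin r × (Fin n → Fin 2 × Fin 2)) ℂ)
    (hσ : DensityMatrix σ) :
    0 < ((outState r n x σ * outState r n y σ).trace).re := by
  obtain ⟨hpos, htrace⟩ := hσ
  have hσ0 : σ ≠ 0 := by
    rintro rfl
    simp at htrace
  obtain ⟨P, hP, hPspan⟩ := exists_posDef_mem_overlapSpan_bigK r n x y
  exact (Complex.lt_def.1 (trace_krausMap_mul_krausMap_pos hP hPspan hpos hσ0)).1
end
end
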